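/- arXiv:1602.06227 — 16 statements merged into one kernel-verified Lean document; each statement's English description precedes it below -/
import Mathlib

section
/- Let F and G be free filters on ℕ such that G is not the Fréchet filter F_r and F is not relatively equivalent to the Fréchet filter. If there is a function f : ℕ → ℕ (not necessarily surjective) with f[G] = F, then there is a surjective function g : ℕ → ℕ with g[G] = F. -/
open Set

/-- `f[G] = {A : f⁻¹(A) ∈ G}`, the image (Rudin–Keisler) filter of a family of sets. -/
def mapFilter {α β : Type*} (f : α → β) (G : Set (Set α)) : Set (Set β) := {A | f ⁻¹' A ∈ G}

/-- `F` is a (proper) filter of subsets. -/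
def IsFilterFam {α : Type*} (F : Set (Set α)) : Prop :=
  Set.univ ∈ F ∧ (∀ A ∈ F, ∀ B : Set α, A ⊆ B → B ∈ F) ∧ (∀ A ∈ F, ∀ B ∈ F, A ∩ B ∈ F)

/-- A free filter: a proper filter containing all cofinite sets. -/
def IsFreeFilter {α : Type*} (F : Set (Set α)) : Prop :=
  IsFilterFam F ∧ (∀ A : Set α, Aᶜ.Finite → A ∈ F) ∧ ∅ ∉ F

/-- `S → F` : `S` is an infinite set converging to the filter `F`, i.e. `S ⊆* A` for all `A ∈ F`. -/
def ConvTo {α : Type*} (S : Set α) (F : Set (Set α)) : Prop :=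
  S.Infinite ∧ ∀ A ∈ F, (S \ A).Finite

/-- `F` is relatively equivalent to the Fréchet filter: some `A ∈ F` converges to `F`. -/
def RelFrechet {α : Type*} (F : Set (Set α)) : Prop := ∃ A ∈ F, ConvTo A F

/-- Rudin–Keisler order: `F ≤_RK G` iff `f[G] = F` for some surjection `f`. -/
def RKle {α : Type*} (F G : Set (Set α)) : Prop :=
  ∃ f : α → α, Function.Surjective f ∧ mapFilter f G = F

/-- `F ≈ G` : there is a bijection `f` with `f[F] = G`. -/
def EquivFilter {α : Type*} (F G : Set (Set α)) : Prop :=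
  ∃ f : α → α, Function.Bijective f ∧ mapFilter f F = G

/-- `F <_RK G` : `F ≤_RK G` and `¬ (F ≈ G)`. -/
def RKlt {α : Type*} (F G : Set (Set α)) : Prop := RKle F G ∧ ¬ EquivFilter F G

/-- An AD-family: an infinite family of infinite sets with pairwise finite intersections. -/
def IsADFamily {α : Type*} (𝒜 : Set (Set α)) : Prop :=
  𝒜.Infinite ∧ (∀ A ∈ 𝒜, A.Infinite) ∧ ∀ A ∈ 𝒜, ∀ B ∈ 𝒜, A ≠ B → (A ∩ B).Finite

/-- The ideal generated by a family `𝒜`: sets almost covered by finitely many members of `𝒜`. -/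
def idealGen {α : Type*} (𝒜 : Set (Set α)) : Set (Set α) :=
  {X | ∃ 𝒜' : Finset (Set α), ↑𝒜' ⊆ 𝒜 ∧ (X \ ⋃₀ ↑𝒜').Finite}

/-- `S_𝒜`: the filter dual to the ideal generated by `𝒜`. -/
def SFam {α : Type*} (𝒜 : Set (Set α)) : Set (Set α) := {F | Fᶜ ∈ idealGen 𝒜}

/-- `F_𝒟 = {F : D ⊆* F for every D ∈ 𝒟}`. -/
def FFam {α : Type*} (𝒟 : Set (Set α)) : Set (Set α) := {F | ∀ D ∈ 𝒟, (D \ F).Finite}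

/-- A nowhere MAD family: every set outside the generated ideal contains an infinite set
almost disjoint from every member of `𝒜`. -/
def IsNMAD {α : Type*} (𝒜 : Set (Set α)) : Prop :=
  IsADFamily 𝒜 ∧ ∀ X : Set α, X ∉ idealGen 𝒜 →
    ∃ B ⊆ X, B.Infinite ∧ ∀ A ∈ 𝒜, (B ∩ A).Finite

/-- A partition of `ℕ` into infinitely many infinite sets. -/
def IsInfPartition (𝒬 : Set (Set ℕ)) : Prop :=
  𝒬.Infinite ∧ (∀ P ∈ 𝒬, P.Infinite) ∧ ⋃₀ 𝒬 = Set.univ ∧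
    ∀ P ∈ 𝒬, ∀ Q ∈ 𝒬, P ≠ Q → P ∩ Q = ∅

/-- `F` is a Fréchet–Urysohn filter: every `F`-positive set contains a sequence converging to `F`. -/
def IsFUFilter {α : Type*} (F : Set (Set α)) : Prop :=
  ∀ A : Set α, Aᶜ ∉ F → ∃ S ⊆ A, ConvTo S F

/-- The trace filter `F|_A = {G ∩ A : G ∈ F}`. -/
def traceFam {α : Type*} (F : Set (Set α)) (A : Set α) : Set (Set α) := {S | ∃ G ∈ F, S = G ∩ A}

/-- Todorčević–Uzcátegui order: there are `A ∈ G⁺`, `B ∈ F` and a bijection `f : A → B`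
with `f[G|_A] = F|_B`. -/
def TUle {α : Type*} (F G : Set (Set α)) : Prop :=
  ∃ A : Set α, Aᶜ ∉ G ∧ ∃ B ∈ F, ∃ f : α → α, Set.BijOn f A B ∧
    {Y : Set α | Y ⊆ B ∧ A ∩ f ⁻¹' Y ∈ traceFam G A} = traceFam F B

/-- If `G ≠ F_r`, `F` is not relatively equivalent to the Fréchet filter and `f[G] = F` for
some (not necessarily surjective) `f`, then `g[G] = F` for some surjection `g`. -/
theorem statement0 (F G : Set (Set ℕ)) (hF : IsFreeFilter F) (hG : IsFreeFilter G)
    (hGFr : G ≠ {A : Set ℕ | Aᶜ.Finite}) (hFr : ¬ RelFrechet F)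
    (h : ∃ f : ℕ → ℕ, mapFilter f G = F) :
    ∃ g : ℕ → ℕ, Function.Surjective g ∧ mapFilter g G = F := by
  obtain ⟨f, hf⟩ := h
  obtain ⟨⟨_, hup, hinter⟩, hcof, _⟩ := hG
  have hA : ∃ A ∈ G, Aᶜ.Infinite := by
    by_contra hcon
    push Not at hcon
    exact hGFr (Set.ext fun A => ⟨fun hA => by simpa using hcon A hA, fun hA => hcof A hA⟩)
  obtain ⟨A, hAG, hAinf⟩ := hA
  haveI : Infinite ↥(Aᶜ) := hAinf.to_subtype
  obtain ⟨e⟩ : Nonempty (↥(Aᶜ) ≃ ℕ) := nonempty_equiv_of_countable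
  classical
  let g : ℕ → ℕ := fun n => if hn : n ∈ Aᶜ then e ⟨n, hn⟩ else f n
  have hgA : ∀ n ∈ A, g n = f n := fun n hn => dif_neg (fun hc => hc hn)
  refine ⟨g, fun m => ⟨(e.symm m : ℕ), ?_⟩, ?_⟩
  · have hm : ((e.symm m : ↥(Aᶜ)) : ℕ) ∈ Aᶜ := (e.symm m).2
    change (if hn : _ then _ else _) = _
    rw [dif_pos hm]
    simp
  · rw [← hf]
    ext B
    change g ⁻¹' B ∈ G ↔ f ⁻¹' B ∈ G
    constructor
    · intro hB
      refine hup _ (hinter _ hAG _ hB) _ ?_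
      rintro n ⟨hn, hnB⟩
      change f n ∈ B
      rw [← hgA n hn]
      exact hnB
    · intro hB
      refine hup _ (hinter _ hAG _ hB) _ ?_
      rintro n ⟨hn, hnB⟩
      change g n ∈ B
      rw [hgA n hn]
      exact hnB
end

section
/- For every AD-family 𝒜 of subsets of ℕ, the character of the filter S_𝒜 equals the cardinality of 𝒜: χ(S_𝒜) = |𝒜|. -/
open Set

theorem upper_aux (𝒜 : Set (Set ℕ)) (h𝒜 : IsADFamily 𝒜) :
    ∃ ℬ : Set (Set ℕ), (ℬ ⊆ SFam 𝒜 ∧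
      (∀ F ∈ SFam 𝒜, ∃ B ∈ ℬ, B ⊆ F)) ∧ Cardinal.mk ↥ℬ ≤ Cardinal.mk ↥𝒜 := by
  classical
  have : Infinite ↥𝒜 := h𝒜.1.to_subtype
  let f : Finset ↥𝒜 × Finset ℕ → Set ℕ :=
    fun p => ((⋃ a ∈ p.1, (a : Set ℕ)) ∪ (p.2 : Set ℕ))ᶜ
  refine ⟨Set.range f, ⟨?_, ?_⟩, ?_⟩
  · rintro _ ⟨⟨s, t⟩, rfl⟩
    refine ⟨s.image Subtype.val, ?_, ?_⟩
    · intro x hx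
      simp only [Finset.coe_image, Set.mem_image] at hx
      obtain ⟨y, _, rfl⟩ := hx
      exact y.2
    · refine t.finite_toSet.subset ?_
      rintro x ⟨hx, hx'⟩
      simp only [f, compl_compl] at hx
      rcases hx with hx | hx
      · exfalso
        apply hx'
        simp only [Set.mem_iUnion] at hx
        obtain ⟨a, ha, hxa⟩ := hx
        exact ⟨a, by simpa using ha, hxa⟩
      · exact hx
  · rintro F ⟨s, hs, hfin⟩
    refine ⟨_, ⟨(s.subtype (· ∈ 𝒜), hfin.toFinset), rfl⟩, ?_⟩
    intro x hx
    by_contra hxF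
    apply hx
    by_cases h : x ∈ ⋃₀ (s : Set (Set ℕ))
    · left
      obtain ⟨a, ha, hxa⟩ := h
      simp only [Set.mem_iUnion]
      exact ⟨⟨a, hs ha⟩, by simpa using ha, hxa⟩
    · right
      simp only [Set.Finite.coe_toFinset]
      exact ⟨hxF, h⟩
  · refine Cardinal.mk_range_le.trans ?_
    rw [Cardinal.mk_prod, Cardinal.lift_id, Cardinal.lift_id, Cardinal.mk_finset_of_infinite,
      Cardinal.mk_finset_of_infinite, Cardinal.mk_nat]
    exact (Cardinal.mul_aleph0_eq (Cardinal.aleph0_le_mk _)).le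

theorem lower_aux (𝒜 : Set (Set ℕ)) (h𝒜 : IsADFamily 𝒜) (ℬ : Set (Set ℕ)) (h1 : ℬ ⊆ SFam 𝒜)
    (h2 : ∀ F ∈ SFam 𝒜, ∃ B ∈ ℬ, B ⊆ F) : Cardinal.mk ↥𝒜 ≤ Cardinal.mk ↥ℬ := by
  classical
  obtain ⟨hinf, hA, had⟩ := h𝒜
  have h1' : ∀ B : ↥ℬ, ∃ s : Finset (Set ℕ), ↑s ⊆ 𝒜 ∧ ((B : Set ℕ)ᶜ \ ⋃₀ ↑s).Finite :=
    fun B => h1 B.2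
  choose g hg hgf using h1'
  have hcov : 𝒜 ⊆ ⋃ B : ↥ℬ, (g B : Set (Set ℕ)) := by
    intro A hAm
    have : Aᶜ ∈ SFam 𝒜 := ⟨{A}, by simpa using hAm, by simp⟩
    obtain ⟨B, hB, hBA⟩ := h2 _ this
    refine Set.mem_iUnion.2 ⟨⟨B, hB⟩, ?_⟩
    by_contra hn
    apply hA A hAm
    have hf : (⋃ C ∈ g ⟨B, hB⟩, A ∩ C).Finite := by
      refine Set.Finite.biUnion (g ⟨B, hB⟩).finite_toSet ?_
      intro C hC
      refine had A hAm C (hg _ hC) ?_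
      rintro rfl
      exact hn hC
    refine ((hgf ⟨B, hB⟩).union hf).subset ?_
    intro x hx
    by_cases h : x ∈ ⋃₀ (g ⟨B, hB⟩ : Set (Set ℕ))
    · right
      obtain ⟨C, hC, hxC⟩ := h
      exact Set.mem_biUnion hC ⟨hx, hxC⟩
    · left
      exact ⟨fun hxB => hBA hxB hx, h⟩
  have : Infinite ↥ℬ := by
    by_contra hn
    rw [not_infinite_iff_finite] at hn
    exact hinf ((Set.finite_iUnion fun B => (g B).finite_toSet).subset hcov)
  have hle := (Cardinal.mk_le_mk_of_subset hcov).trans (Cardinal.mk_iUnion_le_sum_mk)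
  refine hle.trans ((Cardinal.sum_le_sum _ (fun _ => Cardinal.aleph0) fun B => ?_).trans ?_)
  · exact Cardinal.mk_le_aleph0
  · rw [Cardinal.sum_const', Cardinal.mul_aleph0_eq (Cardinal.aleph0_le_mk _)]

/-- For every AD-family `𝒜`, the character of `S_𝒜` equals the cardinality of `𝒜`. -/
theorem statement1 (𝒜 : Set (Set ℕ)) (h𝒜 : IsADFamily 𝒜) :
    sInf {c : Cardinal | ∃ ℬ : Set (Set ℕ), ℬ ⊆ SFam 𝒜 ∧
      (∀ F ∈ SFam 𝒜, ∃ B ∈ ℬ, B ⊆ F) ∧ c = Cardinal.mk ↥ℬ} = Cardinal.mk ↥𝒜 := by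
  obtain ⟨ℬ, ⟨h1, h2⟩, h3⟩ := upper_aux 𝒜 h𝒜
  apply le_antisymm
  · refine le_trans (csInf_le' ?_) h3
    exact ⟨ℬ, h1, h2, rfl⟩
  · refine le_csInf ⟨_, ℬ, h1, h2, rfl⟩ ?_
    rintro _ ⟨ℬ', h1', h2', rfl⟩
    exact lower_aux 𝒜 h𝒜 ℬ' h1' h2'
end

section
/- Let 𝒜 and ℬ be NMAD-families on ℕ and let f : ℕ → ℕ be a surjection. Then f[S_ℬ] = S_𝒜 if and only if both of the following hold: (a) f⁻¹(I) ∈ I(ℬ) for every I ∈ I(𝒜); and (b) for every infinite M ⊆ ℕ with M ∩ A finite for every A ∈ 𝒜, there is an infinite R ⊆ ℕ with R ∩ B finite for every B ∈ ℬ such that f⁻¹(M) ∩ R is infinite. -/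
open Set

/-- A set in the ideal meets every set almost disjoint from the family in a finite set. -/
theorem idealGen_inter_finite {α : Type*} {𝒜 : Set (Set α)} {X R : Set α}
    (hX : X ∈ idealGen 𝒜) (hR : ∀ A ∈ 𝒜, (R ∩ A).Finite) : (X ∩ R).Finite := by
  obtain ⟨F, hF, hfin⟩ := hX
  have h2 : (⋃ A ∈ (F : Set (Set α)), R ∩ A).Finite :=
    F.finite_toSet.biUnion fun A hA => hR A (hF hA)
  refine (hfin.union h2).subset ?_
  rintro x ⟨hx, hxR⟩
  by_cases h : x ∈ ⋃₀ (F : Set (Set α))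
  · obtain ⟨A, hA, hxA⟩ := h
    exact Or.inr (Set.mem_biUnion hA ⟨hxR, hxA⟩)
  · exact Or.inl ⟨hx, h⟩

/-- Combinatorial characterization of `f[S_ℬ] = S_𝒜` for NMAD families. -/
theorem statement2 (𝒜 ℬ : Set (Set ℕ)) (h𝒜 : IsNMAD 𝒜) (hℬ : IsNMAD ℬ)
    (f : ℕ → ℕ) (hf : Function.Surjective f) :
    mapFilter f (SFam ℬ) = SFam 𝒜 ↔
      ((∀ I ∈ idealGen 𝒜, f ⁻¹' I ∈ idealGen ℬ) ∧
        ∀ M : Set ℕ, M.Infinite → (∀ A ∈ 𝒜, (M ∩ A).Finite) →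
          ∃ R : Set ℕ, R.Infinite ∧ (∀ B ∈ ℬ, (R ∩ B).Finite) ∧
            (f ⁻¹' M ∩ R).Infinite) := by
  constructor
  · intro h
    have key : ∀ X : Set ℕ, f ⁻¹' X ∈ idealGen ℬ ↔ X ∈ idealGen 𝒜 := by
      intro X
      have h1 := Set.ext_iff.mp h Xᶜ
      simpa [mapFilter, SFam] using h1
    refine ⟨fun I hI => (key I).2 hI, fun M hM hMA => ?_⟩
    have hMn : M ∉ idealGen 𝒜 := fun hI =>
      hM (by simpa using idealGen_inter_finite hI hMA)
    obtain ⟨R, hRs, hR, hRB⟩ := hℬ.2 (f ⁻¹' M) (fun h' => hMn ((key M).1 h'))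
    exact ⟨R, hR, hRB, by rwa [Set.inter_eq_self_of_subset_right hRs]⟩
  · rintro ⟨ha, hb⟩
    ext X
    change (f ⁻¹' X)ᶜ ∈ idealGen ℬ ↔ Xᶜ ∈ idealGen 𝒜
    rw [← Set.preimage_compl]
    refine ⟨fun hX => ?_, ha _⟩
    by_contra hn
    obtain ⟨M, hMX, hM, hMA⟩ := h𝒜.2 _ hn
    obtain ⟨R, -, hRB, hinf⟩ := hb M hM hMA
    exact hinf ((idealGen_inter_finite hX hRB).subset
      (Set.inter_subset_inter_left _ (Set.preimage_mono hMX)))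
end

section
/- Let 𝒜 be an AD-family on ℕ and let f : ℕ → ℕ be a surjection such that f⁻¹({n}) ∩ A is finite for every n ∈ ℕ and every A ∈ 𝒜 (i.e., f is finite-to-one on each member of 𝒜). Let 𝒟_f = {f[A] : A ∈ 𝒜}, where f[A] = {f(a) : a ∈ A}. Then f[F_𝒜] = F_{𝒟_f}; in particular F_{𝒟_f} ≤_RK F_𝒜 via the function f. -/
open Set

/-- If `f` is a surjection finite-to-one on each member of the AD-family `𝒜`, then
`f[F_𝒜] = F_{𝒟_f}` where `𝒟_f = {f[A] : A ∈ 𝒜}`; in particular `F_{𝒟_f} ≤_RK F_𝒜` via `f`. -/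
theorem statement3 (𝒜 : Set (Set ℕ)) (h𝒜 : IsADFamily 𝒜) (f : ℕ → ℕ)
    (hf : Function.Surjective f)
    (hfin : ∀ n : ℕ, ∀ A ∈ 𝒜, (f ⁻¹' {n} ∩ A).Finite) :
    mapFilter f (FFam 𝒜) = FFam ((fun A => f '' A) '' 𝒜) ∧
      RKle (FFam ((fun A => f '' A) '' 𝒜)) (FFam 𝒜) := by
  have key : mapFilter f (FFam 𝒜) = FFam ((fun A => f '' A) '' 𝒜) := by
    ext B
    constructor
    · rintro h D ⟨A, hA, rfl⟩
      refine ((h A hA).image f).subset ?_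
      rintro _ ⟨⟨a, ha, rfl⟩, hb⟩
      exact ⟨a, ⟨ha, hb⟩, rfl⟩
    · intro h A hA
      have h1 : (f '' A \ B).Finite := h _ ⟨A, hA, rfl⟩
      refine (h1.biUnion (fun n _ => hfin n A hA)).subset ?_
      rintro a ⟨ha, hb⟩
      exact Set.mem_biUnion (x := f a) ⟨⟨a, ha, rfl⟩, hb⟩ ⟨rfl, ha⟩
  exact ⟨key, f, hf, key⟩
end

section
/- Let 𝒜 and ℬ be AD-families on ℕ and let f : ℕ → ℕ be a surjection with f[F_ℬ] = F_𝒜 (i.e., F_𝒜 ≤_RK F_ℬ via f). Then F_{𝒟_f} = F_𝒜, where 𝒟_f = {f[B] : B ∈ ℬ} and f[B] = {f(b) : b ∈ B}. -/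
open Set

/-- If `F_𝒜 ≤_RK F_ℬ` via `f`, then `F_{𝒟_f} = F_𝒜` where `𝒟_f = {f[B] : B ∈ ℬ}`. -/
theorem statement4 (𝒜 ℬ : Set (Set ℕ)) (h𝒜 : IsADFamily 𝒜) (hℬ : IsADFamily ℬ)
    (f : ℕ → ℕ) (hf : Function.Surjective f)
    (h : mapFilter f (FFam ℬ) = FFam 𝒜) :
    FFam ((fun B => f '' B) '' ℬ) = FFam 𝒜 := by
  rw [← h]
  ext X
  constructor
  · intro hX B hB
    have h1 : (f '' B \ X).Finite := hX _ ⟨B, hB, rfl⟩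
    have h2 : ∀ n : ℕ, (B ∩ f ⁻¹' {n}).Finite := by
      intro n
      have h3 : ({n}ᶜ : Set ℕ) ∈ FFam 𝒜 := by
        intro A _
        exact (Set.finite_singleton n).subset (fun x hx => by simpa using hx.2)
      rw [← h] at h3
      exact (h3 B hB).subset (fun x hx => ⟨hx.1, fun hc => hc hx.2⟩)
    refine (h1.biUnion (fun n _ => h2 n)).subset ?_
    intro x hx
    exact Set.mem_biUnion (x := f x) ⟨⟨x, hx.1, rfl⟩, hx.2⟩ ⟨hx.1, rfl⟩
  · rintro hX _ ⟨B, hB, rfl⟩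
    refine ((hX B hB).image f).subset ?_
    rintro _ ⟨⟨x, hx, rfl⟩, hn⟩
    exact ⟨x, ⟨hx, hn⟩, rfl⟩
end

section
/- Let 𝒫 be a partition of ℕ into infinitely many infinite sets and let F be a free filter on ℕ with F ≤_RK F_𝒫. Then either F is relatively equivalent to the Fréchet filter, or F ≈ F_𝒫 (there is a bijection g : ℕ → ℕ with g[F] = F_𝒫). -/
open Set

lemma aux_fibers (c d : ℕ → ℕ) (hc : ∀ k, (c ⁻¹' {k}).Infinite) (hd : ∀ k, (d ⁻¹' {k}).Infinite) :
    ∃ g : ℕ ≃ ℕ, ∀ x, d (g x) = c x := by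
  have key : ∀ k, Nonempty ({x // c x = k} ≃ {x // d x = k}) := by
    intro k
    haveI : Infinite {x // c x = k} := (hc k).to_subtype
    haveI : Infinite {x // d x = k} := (hd k).to_subtype
    exact nonempty_equiv_of_countable
  let e := fun k => (key k).some
  exact ⟨Equiv.ofFiberEquiv e, fun x => Equiv.ofFiberEquiv_map e x⟩

lemma aux_partition (𝒬 : Set (Set ℕ)) (h : IsInfPartition 𝒬) :
    ∃ d : ℕ → ℕ, (∀ k, (d ⁻¹' {k}).Infinite) ∧
      FFam 𝒬 = {A | ∀ k, (d ⁻¹' {k} \ A).Finite} := by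
  obtain ⟨h1, h2, h3, h4⟩ := h
  have ex : ∀ x : ℕ, ∃ P : 𝒬, x ∈ P.1 := by
    intro x
    have : x ∈ ⋃₀ 𝒬 := by rw [h3]; trivial
    obtain ⟨P, hP, hx⟩ := this
    exact ⟨⟨P, hP⟩, hx⟩
  choose q hq using ex
  have uniq : ∀ x (P : 𝒬), x ∈ P.1 → q x = P := by
    intro x P hx
    by_contra hne
    have := h4 _ (q x).2 _ P.2 (fun h => hne (Subtype.ext h))
    have hx' : x ∈ (q x).1 ∩ P.1 := ⟨hq x, hx⟩
    rw [this] at hx'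
    exact hx'
  have fib : ∀ P : 𝒬, q ⁻¹' {P} = P.1 := by
    intro P
    ext x
    constructor
    · intro hx
      have : q x = P := hx
      exact this ▸ hq x
    · intro hx
      exact uniq x P hx
  have surj : Function.Surjective q := by
    intro P
    obtain ⟨x, hx⟩ := (h2 _ P.2).nonempty
    exact ⟨x, uniq x P hx⟩
  haveI : Countable 𝒬 := surj.countable
  haveI : Infinite 𝒬 := h1.to_subtype
  obtain ⟨e⟩ : Nonempty (𝒬 ≃ ℕ) := nonempty_equiv_of_countable
  have fib2 : ∀ k, (fun x => e (q x)) ⁻¹' {k} = (e.symm k).1 := by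
    intro k
    rw [← fib]
    ext x
    simp [Equiv.eq_symm_apply]
  refine ⟨fun x => e (q x), fun k => ?_, ?_⟩
  · rw [fib2]; exact h2 _ (e.symm k).2
  · ext A
    constructor
    · intro hA k
      rw [fib2]
      exact hA _ (e.symm k).2
    · intro hA D hD
      have := hA (e ⟨D, hD⟩)
      rw [fib2] at this
      simpa using this

/-- Any RK-predecessor of the FAN-filter is either relatively equivalent to the Fréchet filter
or equivalent to the FAN-filter itself. -/
theorem statement5 (𝒬 : Set (Set ℕ)) (h𝒬 : IsInfPartition 𝒬) (F : Set (Set ℕ))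
    (hF : IsFreeFilter F) (h : RKle F (FFam 𝒬)) :
    RelFrechet F ∨ ∃ g : ℕ → ℕ, Function.Bijective g ∧ mapFilter g F = FFam 𝒬 := by
  obtain ⟨d, hd, hQ⟩ := aux_partition 𝒬 h𝒬
  obtain ⟨f, hf, rfl⟩ := h
  rw [hQ] at hF ⊢
  obtain ⟨-, hcof, -⟩ := hF
  -- `f` is finite-to-one on each piece
  have hfin : ∀ k n, (d ⁻¹' {k} ∩ f ⁻¹' {n}).Finite := by
    intro k n
    have := hcof {n}ᶜ (by simp) k
    simpa [diff_eq] using this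
  have hS : ∀ k A, (d ⁻¹' {k} \ f ⁻¹' A).Finite ↔ (f '' (d ⁻¹' {k}) \ A).Finite := by
    intro k A
    constructor
    · intro h
      refine (h.image f).subset ?_
      rintro _ ⟨⟨x, hx, rfl⟩, hA⟩
      exact ⟨x, ⟨hx, hA⟩, rfl⟩
    · intro h
      refine (h.biUnion (fun n _ => hfin k n)).subset ?_
      rintro x ⟨hx, hA⟩
      simp only [mem_iUnion]
      exact ⟨f x, ⟨⟨x, hx, rfl⟩, hA⟩, hx, rfl⟩
  have hcov : ∀ n, ∃ k, n ∈ f '' (d ⁻¹' {k}) := by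
    intro n
    obtain ⟨x, rfl⟩ := hf n
    exact ⟨d x, x, rfl, rfl⟩
  classical
  let r : ℕ → ℕ := fun n => Nat.find (hcov n)
  have hr : ∀ n, n ∈ f '' (d ⁻¹' {r n}) := fun n => Nat.find_spec (hcov n)
  have hrmin : ∀ n k, n ∈ f '' (d ⁻¹' {k}) → r n ≤ k := fun n k h => Nat.find_min' (hcov n) h
  have hmem : ∀ A, A ∈ mapFilter f {A | ∀ k, (d ⁻¹' {k} \ A).Finite} ↔
      ∀ k, (r ⁻¹' {k} \ A).Finite := by
    intro A
    change (∀ k, (d ⁻¹' {k} \ f ⁻¹' A).Finite) ↔ _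
    simp only [hS]
    constructor
    · intro h k
      refine (h k).subset ?_
      rintro n ⟨hn, hA⟩
      have hn : r n = k := hn
      exact ⟨hn ▸ hr n, hA⟩
    · intro h k
      refine ((finite_Iic k).biUnion (fun j _ => h j)).subset ?_
      rintro n ⟨hn, hA⟩
      simp only [mem_iUnion]
      exact ⟨r n, hrmin n k hn, rfl, hA⟩
  have h0 : (r ⁻¹' {0}).Infinite := by
    intro h
    apply hd 0
    have h' : (f '' (d ⁻¹' {0}) \ (∅ : Set ℕ)).Finite := by
      refine h.subset ?_
      rintro n ⟨hn, -⟩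
      exact Nat.le_zero.1 (hrmin n 0 hn)
    have := (hS 0 ∅).2 h'
    simpa using this
  by_cases hI : {k | (r ⁻¹' {k}).Infinite}.Finite
  · left
    refine ⟨{n | (r ⁻¹' {r n}).Infinite}, ?_, ?_, ?_⟩
    · rw [hmem]
      intro k
      by_cases hk : (r ⁻¹' {k}).Infinite
      · convert finite_empty
        ext n
        simp only [mem_diff, mem_preimage, mem_singleton_iff, mem_setOf_eq, mem_empty_iff_false,
          iff_false, not_and, not_not]
        rintro rfl
        exact hk
      · exact (not_infinite.1 hk).subset diff_subset
    · refine h0.mono ?_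
      intro n hn
      have hn : r n = 0 := hn
      simpa [hn] using h0
    · intro A hA
      rw [hmem] at hA
      refine (hI.biUnion (fun k _ => hA k)).subset ?_
      rintro n ⟨hn, hA⟩
      simp only [mem_iUnion]
      exact ⟨r n, hn, rfl, hA⟩
  · right
    haveI : Infinite {k | (r ⁻¹' {k}).Infinite} := Set.Infinite.to_subtype hI
    obtain ⟨e⟩ : Nonempty ({k | (r ⁻¹' {k}).Infinite} ≃ ℕ) := nonempty_equiv_of_countable
    let c : ℕ → ℕ := fun n => if h : (r ⁻¹' {r n}).Infinite then e ⟨r n, h⟩ else n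
    have hc1 : ∀ k, r ⁻¹' {(e.symm k).1} ⊆ c ⁻¹' {k} := by
      intro k n hn
      have hn : r n = (e.symm k).1 := hn
      have hi : (r ⁻¹' {r n}).Infinite := by rw [hn]; exact (e.symm k).2
      change c n = k
      simp only [c, dif_pos hi]
      rw [← Equiv.eq_symm_apply]
      exact Subtype.ext hn
    have hc2 : ∀ k, c ⁻¹' {k} ⊆ r ⁻¹' {(e.symm k).1} ∪ {k} := by
      intro k n hn
      have hn : c n = k := hn
      by_cases hi : (r ⁻¹' {r n}).Infinite
      · left
        simp only [c, dif_pos hi] at hn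
        rw [← Equiv.eq_symm_apply] at hn
        change r n = _
        rw [← hn]
      · right
        simp only [c, dif_neg hi] at hn
        exact hn
    have hmem2 : ∀ A, A ∈ mapFilter f {A | ∀ k, (d ⁻¹' {k} \ A).Finite} ↔
        ∀ k, (c ⁻¹' {k} \ A).Finite := by
      intro A
      rw [hmem]
      constructor
      · intro h k
        refine ((h (e.symm k).1).union (finite_singleton k)).subset ?_
        rintro n ⟨hn, hA⟩
        rcases hc2 k hn with h | h
        · exact Or.inl ⟨h, hA⟩
        · exact Or.inr h
      · intro h k
        by_cases hk : (r ⁻¹' {k}).Infinite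
        · refine (h (e ⟨k, hk⟩)).subset ?_
          have := hc1 (e ⟨k, hk⟩)
          simp only [Equiv.symm_apply_apply] at this
          exact diff_subset_diff_left this
        · exact (not_infinite.1 hk).subset diff_subset
    obtain ⟨g, hg⟩ := aux_fibers c d (fun k => Set.Infinite.mono (hc1 k) (e.symm k).2) hd
    refine ⟨g, g.bijective, ?_⟩
    ext A
    refine (hmem2 (g ⁻¹' A)).trans ?_
    refine forall_congr' fun k => ?_
    have : c ⁻¹' {k} \ g ⁻¹' A = g ⁻¹' (d ⁻¹' {k} \ A) := by
      ext n
      simp [hg]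
    rw [this]
    constructor
    · intro h
      have := h.image g
      rwa [image_preimage_eq _ g.surjective] at this
    · intro h
      exact h.preimage g.injective.injOn
end

section
/- Let F be a free filter on ℕ that is not relatively equivalent to the Fréchet filter. Then for every A ∈ F such that ℕ \ A is infinite (i.e., A ∈ F \ F_r) there is a bijection f : A → ℕ such that f[F|_A] = F; in particular the trace filter F|_A is equivalent to F. -/
open Set

/-- If `F` is not relatively equivalent to the Fréchet filter, then for every `A ∈ F \ F_r`
there is a bijection `f : A → ℕ` with `f[F|_A] = F`. -/
theorem statement6 (F : Set (Set ℕ)) (hF : IsFreeFilter F) (hnr : ¬ RelFrechet F)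
    (A : Set ℕ) (hA : A ∈ F) (hAc : Aᶜ.Infinite) :
    ∃ f : ℕ → ℕ, Set.BijOn f A Set.univ ∧
      {Y : Set ℕ | A ∩ f ⁻¹' Y ∈ traceFam F A} = F := by
  obtain ⟨⟨-, hup, hint⟩, hcof, hne⟩ := hF
  have hAinf : A.Infinite := by
    intro hfin
    have h1 : Aᶜ ∈ F := hcof _ (by rwa [compl_compl])
    have h2 := hint _ hA _ h1
    rw [Set.inter_compl_self] at h2
    exact hne h2
  obtain ⟨B, hB, hBinf⟩ : ∃ B ∈ F, (A \ B).Infinite := by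
    by_contra hcon
    push Not at hcon
    exact hnr ⟨A, hA, hAinf, fun B hB => hcon B hB⟩
  have hC : A ∩ B ∈ F := hint _ hA _ hB
  have hDinf : (A ∩ B)ᶜ.Infinite := hAc.mono (Set.compl_subset_compl.2 Set.inter_subset_left)
  have i1 : Infinite ↥(A \ B) := hBinf.to_subtype
  have i2 : Infinite ↥((A ∩ B)ᶜ) := hDinf.to_subtype
  obtain ⟨e⟩ : Nonempty (↥(A \ B) ≃ ↥((A ∩ B)ᶜ)) := nonempty_equiv_of_countable
  classical
  let f : ℕ → ℕ := fun x => if h : x ∈ A \ B then (e ⟨x, h⟩ : ℕ) else x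
  have f1 : ∀ x (h : x ∈ A \ B), f x = e ⟨x, h⟩ := fun x h => dif_pos h
  have f2 : ∀ x, x ∈ A ∩ B → f x = x := fun x h => dif_neg (fun h' => h'.2 h.2)
  refine ⟨f, ⟨fun _ _ => Set.mem_univ _, ?_, ?_⟩, ?_⟩
  · intro x hx y hy hxy
    by_cases hxB : x ∈ B <;> by_cases hyB : y ∈ B
    · rwa [f2 x ⟨hx, hxB⟩, f2 y ⟨hy, hyB⟩] at hxy
    · rw [f2 x ⟨hx, hxB⟩, f1 y ⟨hy, hyB⟩] at hxy
      exact absurd (hxy ▸ ⟨hx, hxB⟩) (e ⟨y, ⟨hy, hyB⟩⟩).2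
    · rw [f1 x ⟨hx, hxB⟩, f2 y ⟨hy, hyB⟩] at hxy
      exact absurd (hxy ▸ ⟨hy, hyB⟩) (e ⟨x, ⟨hx, hxB⟩⟩).2
    · rw [f1 x ⟨hx, hxB⟩, f1 y ⟨hy, hyB⟩] at hxy
      have := e.injective (Subtype.ext hxy)
      exact congrArg Subtype.val this
  · intro y _
    by_cases hy : y ∈ A ∩ B
    · exact ⟨y, hy.1, f2 y hy⟩
    · refine ⟨e.symm ⟨y, hy⟩, (e.symm ⟨y, hy⟩).2.1, ?_⟩
      rw [f1 _ (e.symm ⟨y, hy⟩).2]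
      simp
  · ext Y
    constructor
    · rintro ⟨G, hG, hGY⟩
      refine hup _ (hint _ hG _ hC) _ ?_
      rintro x ⟨hxG, hxC⟩
      have : x ∈ A ∩ f ⁻¹' Y := hGY ▸ ⟨hxG, hxC.1⟩
      have h2 : f x ∈ Y := this.2
      rwa [f2 x hxC] at h2
    · intro hY
      refine ⟨A ∩ f ⁻¹' Y, hup _ (hint _ hY _ hC) _ ?_, ?_⟩
      · rintro x ⟨hxY, hxC⟩
        refine ⟨hxC.1, ?_⟩
        change f x ∈ Y
        rwa [f2 x hxC]
      · ext x
        simp only [Set.mem_inter_iff]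
        tauto
end

section
/- Let 𝒜 be a NMAD-family on ℕ that contains a countable subfamily {Aₙ : n ∈ ℕ} ⊆ 𝒜 which is a partition of ℕ. Then S_𝒫 ≤_RK S_𝒜 for every partition 𝒫 of ℕ into infinitely many infinite sets. -/
open Set

theorem exists_infinite_fibers (S T : Set ℕ) (hS : S.Infinite) (hT : T.Infinite) :
    ∃ g : ℕ → ℕ, (∀ x ∈ S, g x ∈ T) ∧ ∀ q ∈ T, {x | x ∈ S ∧ g x = q}.Infinite := by
  classical
  have : Infinite S := hS.to_subtype
  have : Infinite T := hT.to_subtype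
  obtain ⟨e⟩ := nonempty_equiv_of_countable (α := S) (β := T × ℕ)
  refine ⟨fun x => if h : x ∈ S then ((e ⟨x, h⟩).1 : ℕ) else 0, ?_, ?_⟩
  · intro x hx
    simp [hx]
  · intro q hq
    have hinj : Function.Injective (fun k : ℕ => ((e.symm (⟨q, hq⟩, k) : S) : ℕ)) := by
      intro a b hab
      have h1 := e.symm.injective (Subtype.ext hab)
      exact congrArg Prod.snd h1
    refine (Set.infinite_range_of_injective hinj).mono ?_
    rintro _ ⟨k, rfl⟩
    simp

theorem exists_enum (Q : Set (Set ℕ)) (h : IsInfPartition Q) : Nonempty (ℕ ≃ Q) := by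
  obtain ⟨h1, h2, h3, h4⟩ := h
  have : Infinite Q := h1.to_subtype
  have hn : ∀ P : Q, ∃ x, x ∈ (P : Set ℕ) := fun P => (h2 P P.2).nonempty
  choose c hc using hn
  have : Countable Q := by
    refine Function.Injective.countable (f := c) ?_
    intro P R hPR
    by_contra hne
    have := h4 P P.2 R R.2 (fun h => hne (Subtype.ext h))
    have hm : c P ∈ (P : Set ℕ) ∩ R := ⟨hc P, hPR ▸ hc R⟩
    rw [this] at hm
    exact hm
  exact nonempty_equiv_of_countable

/-- If a NMAD family `𝒜` contains a countable subfamily which is a partition of `ℕ`, then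
`S_𝒬 ≤_RK S_𝒜` for every partition `𝒬` of `ℕ` into infinitely many infinite sets. -/
theorem statement10 (𝒜 : Set (Set ℕ)) (h𝒜 : IsNMAD 𝒜)
    (A : ℕ → Set ℕ) (hmem : ∀ n, A n ∈ 𝒜) (hinj : Function.Injective A)
    (hdisj : ∀ m n : ℕ, m ≠ n → A m ∩ A n = ∅) (hcov : (⋃ n, A n) = Set.univ) :
    ∀ 𝒬 : Set (Set ℕ), IsInfPartition 𝒬 → RKle (SFam 𝒬) (SFam 𝒜) := by
  classical
  intro 𝒬 h𝒬
  obtain ⟨e⟩ := exists_enum 𝒬 h𝒬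
  obtain ⟨-, h2, h3, h4⟩ := h𝒬
  obtain ⟨⟨-, hAinf, hAD⟩, -⟩ := h𝒜
  choose g hg1 hg2 using fun n : ℕ =>
    exists_infinite_fibers (A n) (e n) (hAinf _ (hmem n)) (h2 _ (e n).2)
  have hidx : ∀ x : ℕ, ∃ n, x ∈ A n := fun x => by
    have : x ∈ ⋃ n, A n := hcov ▸ Set.mem_univ x
    simpa using this
  choose idx hidx using hidx
  have huniq : ∀ x n, x ∈ A n → idx x = n := by
    intro x n hx
    by_contra hne
    have := hdisj _ _ hne
    have hm : x ∈ A (idx x) ∩ A n := ⟨hidx x, hx⟩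
    rw [this] at hm
    exact hm
  have hcovQ : ∀ q : ℕ, ∃ n, q ∈ (e n : Set ℕ) := by
    intro q
    have : q ∈ ⋃₀ 𝒬 := h3 ▸ Set.mem_univ q
    obtain ⟨P, hP, hq⟩ := this
    exact ⟨e.symm ⟨P, hP⟩, by simpa using hq⟩
  have hdisjQ : ∀ q m n, q ∈ (e m : Set ℕ) → q ∈ (e n : Set ℕ) → m = n := by
    intro q m n hm hn
    by_contra hne
    have := h4 _ (e m).2 _ (e n).2 (fun h => hne (e.injective (Subtype.ext h)))
    have hq : q ∈ (e m : Set ℕ) ∩ e n := ⟨hm, hn⟩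
    rw [this] at hq
    exact hq
  let f : ℕ → ℕ := fun x => g (idx x) x
  have hfA : ∀ n x, x ∈ A n → f x = g n x := by
    intro n x hx
    simp only [f, huniq x n hx]
  have hfib : ∀ n, ∀ q ∈ (e n : Set ℕ), {x | x ∈ A n ∧ f x = q}.Infinite := by
    intro n q hq
    refine (hg2 n q hq).mono ?_
    rintro x ⟨hx, hgx⟩
    exact ⟨hx, (hfA n x hx).trans hgx⟩
  -- the indices of the pieces met by `X`
  let N : Set ℕ → Set ℕ := fun X => {n | ∃ q ∈ X, q ∈ (e n : Set ℕ)}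
  have key1 : ∀ X : Set ℕ, X ∈ idealGen 𝒬 → (N X).Finite := by
    rintro X ⟨F, hF, hfin⟩
    choose p hp using hcovQ
    refine ((hfin.image p).union
      ((F.finite_toSet.preimage (f := fun n => (e n : Set ℕ)) ?_))).subset ?_
    · intro a _ b _ hab
      exact e.injective (Subtype.ext hab)
    · rintro n ⟨q, hqX, hqn⟩
      by_cases hq : q ∈ ⋃₀ (F : Set (Set ℕ))
      · right
        obtain ⟨P, hP, hqP⟩ := hq
        have : e (e.symm ⟨P, hF hP⟩) = ⟨P, hF hP⟩ := by simp
        have hn := hdisjQ q n (e.symm ⟨P, hF hP⟩) hqn (by rw [this]; exact hqP)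
        show (e n : Set ℕ) ∈ (F : Set (Set ℕ))
        rw [hn, this]
        exact hP
      · left
        exact ⟨q, ⟨hqX, hq⟩, hdisjQ q _ _ (hp q) hqn⟩
  have key2 : ∀ X : Set ℕ, (N X).Finite → X ∈ idealGen 𝒬 := by
    intro X hX
    refine ⟨hX.toFinset.image (fun n => (e n : Set ℕ)), ?_, ?_⟩
    · intro P hP
      simp only [Finset.coe_image, Set.mem_image] at hP
      obtain ⟨n, -, rfl⟩ := hP
      exact (e n).2
    · convert Set.finite_empty (α := ℕ)
      rw [Set.sdiff_eq_empty]
      intro q hq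
      obtain ⟨n, hn⟩ := hcovQ q
      refine ⟨e n, ?_, hn⟩
      simp only [Finset.coe_image, Set.mem_image]
      exact ⟨n, hX.mem_toFinset.2 (⟨q, hq, hn⟩ : n ∈ N X), rfl⟩
  have key3 : ∀ X : Set ℕ, (N X).Finite → f ⁻¹' X ∈ idealGen 𝒜 := by
    intro X hX
    refine ⟨hX.toFinset.image A, ?_, ?_⟩
    · intro P hP
      simp only [Finset.coe_image, Set.mem_image] at hP
      obtain ⟨n, -, rfl⟩ := hP
      exact hmem n
    · convert Set.finite_empty (α := ℕ)
      rw [Set.sdiff_eq_empty]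
      intro x hx
      refine ⟨A (idx x), ?_, hidx x⟩
      simp only [Finset.coe_image, Set.mem_image]
      exact ⟨idx x, hX.mem_toFinset.2 (⟨f x, hx, hg1 _ _ (hidx x)⟩ : idx x ∈ N X), rfl⟩
  have key4 : ∀ X : Set ℕ, f ⁻¹' X ∈ idealGen 𝒜 → (N X).Finite := by
    rintro X ⟨F, hF, hfin⟩
    refine (F.finite_toSet.preimage (f := A) hinj.injOn).subset ?_
    rintro n ⟨q, hqX, hqn⟩
    by_contra hn
    refine hfib n q hqn ?_
    have hU : (⋃ P ∈ (F : Set (Set ℕ)), A n ∩ P).Finite := by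
      refine F.finite_toSet.biUnion ?_
      intro P hP
      refine hAD _ (hmem n) _ (hF hP) ?_
      rintro h
      exact hn (show A n ∈ (F : Set (Set ℕ)) from h ▸ hP)
    refine (hfin.union hU).subset ?_
    rintro x ⟨hxA, hxq⟩
    by_cases hx : x ∈ ⋃₀ (F : Set (Set ℕ))
    · right
      obtain ⟨P, hP, hxP⟩ := hx
      exact Set.mem_biUnion hP ⟨hxA, hxP⟩
    · left
      refine ⟨?_, hx⟩
      show f x ∈ X
      rw [hxq]
      exact hqX
  refine ⟨f, ?_, ?_⟩
  · intro q
    obtain ⟨n, hn⟩ := hcovQ q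
    obtain ⟨x, -, hx⟩ := (hfib n q hn).nonempty
    exact ⟨x, hx⟩
  · ext X
    show f ⁻¹' Xᶜ ∈ idealGen 𝒜 ↔ Xᶜ ∈ idealGen 𝒬
    exact ⟨fun h => key2 _ (key4 _ h), fun h => key3 _ (key1 _ h)⟩
end

section
/- Let 𝒜 be a completely separable NMAD-family on ℕ of cardinality 𝔠 such that for every M ∈ 𝒜* the set {A ∈ 𝒜 : A ∩ M is infinite} has cardinality 𝔠, and such that 𝒜 contains a countable subfamily which is a partition of ℕ. Then for every partition 𝒫 of ℕ into infinitely many infinite sets: S_𝒫 ≤_RK S_𝒜, but it is not the case that S_𝒫 ≤_TU S_𝒜. -/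
open Set

/-- `𝒜*`: infinite sets meeting infinitely many members of `𝒜` in an infinite set. -/
def starFam (𝒜 : Set (Set ℕ)) : Set (Set ℕ) :=
  {M | M.Infinite ∧ {A ∈ 𝒜 | (A ∩ M).Infinite}.Infinite}

/-- Completely separable AD-family. -/
def CompletelySeparable (𝒜 : Set (Set ℕ)) : Prop := ∀ M ∈ starFam 𝒜, ∃ A ∈ 𝒜, A ⊆ M

lemma ideal_mono {α : Type*} {𝒜 : Set (Set α)} {X Y : Set α} (h : X ⊆ Y) (hY : Y ∈ idealGen 𝒜) :
    X ∈ idealGen 𝒜 := by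
  obtain ⟨H, hH, hf⟩ := hY
  exact ⟨H, hH, hf.subset (sdiff_subset_sdiff_left h)⟩

lemma ideal_of_finite {α : Type*} {𝒜 : Set (Set α)} {X : Set α} (F : Set (Set α)) (hF : F.Finite)
    (hFA : F ⊆ 𝒜) (h : (X \ ⋃₀ F).Finite) : X ∈ idealGen 𝒜 := by
  refine ⟨hF.toFinset, by simpa using hFA, by simpa using h⟩

lemma ad_inter_finite {𝒜 : Set (Set ℕ)} (h : IsADFamily 𝒜) (H : Finset (Set ℕ)) (hH : ↑H ⊆ 𝒜)
    {A : Set ℕ} (hA : A ∈ 𝒜) (hn : A ∉ H) : (A ∩ ⋃₀ (↑H : Set (Set ℕ))).Finite := by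
  rw [sUnion_eq_biUnion, inter_iUnion₂]
  refine H.finite_toSet.biUnion fun B hB => ?_
  exact h.2.2 A hA B (hH hB) (fun e => hn (e ▸ hB))

lemma ad_not_mem {𝒜 : Set (Set ℕ)} (h : IsADFamily 𝒜) (H : Finset (Set ℕ)) (hH : ↑H ⊆ 𝒜)
    {A Z : Set ℕ} (hA : A ∈ 𝒜) (hn : A ∉ H) (hZ : (Z \ ⋃₀ (↑H : Set (Set ℕ))).Finite) :
    (A ∩ Z).Finite := by
  refine ((ad_inter_finite h H hH hA hn).union hZ).subset ?_
  rintro x ⟨hx, hz⟩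
  by_cases hc : x ∈ ⋃₀ (↑H : Set (Set ℕ))
  · exact Or.inl ⟨hx, hc⟩
  · exact Or.inr ⟨hz, hc⟩

lemma part_ad {𝒬 : Set (Set ℕ)} (h : IsInfPartition 𝒬) : IsADFamily 𝒬 :=
  ⟨h.1, h.2.1, fun P hP Q hQ hne => by rw [h.2.2.2 P hP Q hQ hne]; exact finite_empty⟩

lemma part_countable {𝒬 : Set (Set ℕ)} (h : IsInfPartition 𝒬) : 𝒬.Countable := by
  have hne : ∀ P : 𝒬, ∃ x, x ∈ P.1 := fun P => (h.2.1 P.1 P.2).nonempty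
  choose g hg using hne
  have : Function.Injective g := by
    intro P Q hPQ
    by_contra hc
    have := h.2.2.2 P.1 P.2 Q.1 Q.2 (fun e => hc (Subtype.ext e))
    have h2 : g P ∈ P.1 ∩ Q.1 := ⟨hg P, hPQ ▸ hg Q⟩
    rw [this] at h2
    exact h2
  exact this.countable

lemma exists_inf_to_one (S T : Set ℕ) (hS : S.Infinite) (hT : T.Infinite) :
    ∃ g : ℕ → ℕ, (∀ x ∈ S, g x ∈ T) ∧ ∀ y ∈ T, (S ∩ g ⁻¹' {y}).Infinite := by
  classical
  haveI := hS.to_subtype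
  haveI := hT.to_subtype
  obtain ⟨eS⟩ := nonempty_equiv_of_countable (α := S) (β := ℕ × ℕ)
  obtain ⟨eT⟩ := nonempty_equiv_of_countable (α := T) (β := ℕ)
  refine ⟨fun x => if h : x ∈ S then (eT.symm (eS ⟨x, h⟩).1).1 else 0, ?_, ?_⟩
  · intro x hx
    simp [hx]
  · intro y hy
    have hinj : Function.Injective (fun k : ℕ => (eS.symm (eT ⟨y, hy⟩, k)).1) := by
      intro a b hab
      have := eS.symm.injective (Subtype.ext hab)
      simpa using this
    refine (infinite_range_of_injective hinj).mono ?_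
    rintro _ ⟨k, rfl⟩
    simp

lemma rk_part (𝒜 : Set (Set ℕ)) (h𝒜 : IsADFamily 𝒜)
    (A : ℕ → Set ℕ) (hmem : ∀ n, A n ∈ 𝒜) (hinj : Function.Injective A)
    (hdisj : ∀ m n : ℕ, m ≠ n → A m ∩ A n = ∅) (hcov : (⋃ n, A n) = Set.univ)
    (𝒬 : Set (Set ℕ)) (hQ : IsInfPartition 𝒬) : RKle (SFam 𝒬) (SFam 𝒜) := by
  haveI := hQ.1.to_subtype
  haveI := (part_countable hQ).to_subtype
  obtain ⟨e⟩ := nonempty_equiv_of_countable (α := ℕ) (β := 𝒬)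
  set P : ℕ → Set ℕ := fun n => (e n).1 with hP
  have hPmem : ∀ n, P n ∈ 𝒬 := fun n => (e n).2
  have hPinj : Function.Injective P := Subtype.val_injective.comp e.injective
  have hPex : ∀ Q ∈ 𝒬, ∃ n, P n = Q := fun Q hQ' => ⟨e.symm ⟨Q, hQ'⟩, by simp [hP]⟩
  have hPu : ∀ m n y, y ∈ P m → y ∈ P n → m = n := by
    intro m n y hm hn
    by_contra hc
    have := hQ.2.2.2 _ (hPmem m) _ (hPmem n) (fun e => hc (hPinj e))
    exact (this ▸ (⟨hm, hn⟩ : y ∈ P m ∩ P n) : y ∈ (∅ : Set ℕ))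
  have hAu : ∀ m n y, y ∈ A m → y ∈ A n → m = n := by
    intro m n y hm hn
    by_contra hc
    exact (hdisj m n hc ▸ (⟨hm, hn⟩ : y ∈ A m ∩ A n) : y ∈ (∅ : Set ℕ))
  have hidx : ∀ x, ∃ n, x ∈ A n := fun x => by
    have : x ∈ ⋃ n, A n := hcov ▸ mem_univ x
    simpa using this
  have hpidx : ∀ y, ∃ n, y ∈ P n := fun y => by
    have : y ∈ ⋃₀ 𝒬 := hQ.2.2.1 ▸ mem_univ y
    obtain ⟨Q, hQ', hy⟩ := this
    obtain ⟨n, rfl⟩ := hPex Q hQ'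
    exact ⟨n, hy⟩
  choose idx hidx using hidx
  choose pidx hpidx using hpidx
  have hg := fun n => exists_inf_to_one (A n) (P n) (h𝒜.2.1 _ (hmem n)) (hQ.2.1 _ (hPmem n))
  choose g hg1 hg2 using hg
  set f : ℕ → ℕ := fun x => g (idx x) x with hf
  have hfA : ∀ n, ∀ x ∈ A n, f x = g n x := fun n x hx => by
    simp only [hf]; rw [hAu _ _ x (hidx x) hx]
  have hfP : ∀ x, f x ∈ P (idx x) := fun x => hg1 _ _ (hidx x)
  have hfib : ∀ n, ∀ y ∈ P n, (A n ∩ f ⁻¹' {y}).Infinite := by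
    intro n y hy
    refine (hg2 n y hy).mono ?_
    rintro x ⟨hx, hxy⟩
    refine ⟨hx, ?_⟩
    simp only [mem_preimage, mem_singleton_iff] at hxy ⊢
    rw [hfA n x hx, hxy]
  have key : ∀ T : Set ℕ, f ⁻¹' T ∈ idealGen 𝒜 ↔ T ∈ idealGen 𝒬 := by
    intro T
    constructor
    · rintro ⟨H, hH, hfin⟩
      refine ideal_of_finite (P '' (A ⁻¹' ↑H)) ((H.finite_toSet.preimage hinj.injOn).image P) ?_ ?_
      · rintro _ ⟨n, -, rfl⟩; exact hPmem n
      · convert finite_empty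
        rw [sdiff_eq_empty]
        intro y hy
        refine ⟨P (pidx y), ⟨pidx y, ?_, rfl⟩, hpidx y⟩
        by_contra hc
        refine hfib _ y (hpidx y) ((ad_not_mem h𝒜 H hH (hmem (pidx y)) hc hfin).subset ?_)
        rintro x ⟨hx, hxy⟩
        refine ⟨hx, ?_⟩
        simp only [mem_preimage, mem_singleton_iff] at hxy ⊢
        rwa [hxy]
    · rintro ⟨G, hG, hfin⟩
      refine ideal_of_finite (A '' (P ⁻¹' ↑G ∪ pidx '' (T \ ⋃₀ ↑G)))
        (((G.finite_toSet.preimage hPinj.injOn).union (hfin.image _)).image A) ?_ ?_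
      · rintro _ ⟨n, -, rfl⟩; exact hmem n
      · convert finite_empty
        rw [sdiff_eq_empty]
        intro x hx
        refine ⟨A (idx x), ⟨idx x, ?_, rfl⟩, hidx x⟩
        by_cases hc : f x ∈ ⋃₀ (↑G : Set (Set ℕ))
        · left
          obtain ⟨Q, hQG, hxQ⟩ := hc
          obtain ⟨n, rfl⟩ := hPex Q (hG hQG)
          rw [hPu _ _ _ (hfP x) hxQ]
          exact hQG
        · right
          exact ⟨f x, ⟨hx, hc⟩, hPu _ _ _ (hpidx (f x)) (hfP x)⟩
  refine ⟨f, ?_, ?_⟩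
  · intro y
    obtain ⟨x, -, hx⟩ := (hfib _ y (hpidx y)).nonempty
    exact ⟨x, hx⟩
  · ext Y
    exact key Yᶜ

lemma tu_part (𝒜 : Set (Set ℕ)) (h𝒜 : IsADFamily 𝒜)
    (hbig : ∀ M ∈ starFam 𝒜, Cardinal.mk ↥{A ∈ 𝒜 | (A ∩ M).Infinite} = Cardinal.continuum)
    (𝒬 : Set (Set ℕ)) (hQ : IsInfPartition 𝒬) : ¬ TUle (SFam 𝒬) (SFam 𝒜) := by
  classical
  rintro ⟨X, hX, B, ⟨GB, hGB, hGBf⟩, f, hbij, heq⟩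
  have key : ∀ T : Set ℕ, X ∩ f ⁻¹' T ∈ idealGen 𝒜 ↔ B ∩ T ∈ idealGen 𝒬 := by
    intro T
    have h1 := Set.ext_iff.1 heq (B \ T)
    constructor
    · intro h
      have : B \ T ∈ traceFam (SFam 𝒬) B := by
        rw [← h1]
        refine ⟨sdiff_subset, (X ∩ f ⁻¹' T)ᶜ, ?_, ?_⟩
        · simpa [SFam] using h
        · ext x
          have hm : x ∈ X → f x ∈ B := fun h => hbij.mapsTo h
          simp only [mem_inter_iff, mem_preimage, mem_sdiff, mem_compl_iff]
          tauto
      obtain ⟨G, hG, hGe⟩ := this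
      refine ideal_mono ?_ hG
      rintro x ⟨hx, hxT⟩ hxG
      exact (hGe ▸ (⟨hxG, hx⟩ : x ∈ G ∩ B) : x ∈ B \ T).2 hxT
    · intro h
      have : B \ T ∈ traceFam (SFam 𝒬) B := by
        refine ⟨(B ∩ T)ᶜ, ?_, ?_⟩
        · simpa [SFam] using h
        · ext x
          simp only [mem_inter_iff, mem_sdiff, mem_compl_iff]
          tauto
      rw [← h1] at this
      obtain ⟨-, G, hG, hGe⟩ := this
      refine ideal_mono ?_ hG
      rintro x ⟨hx, hxT⟩ hxG
      exact (hGe ▸ (⟨hxG, hx⟩ : x ∈ G ∩ X) : x ∈ X ∩ f ⁻¹' (B \ T)).2.2 hxT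
  have key2 : ∀ Z ⊆ X, Z ∈ idealGen 𝒜 → f '' Z ∈ idealGen 𝒬 := by
    intro Z hZ h
    have h2 : B ∩ f '' Z ∈ idealGen 𝒬 := by
      rw [← key]
      refine ideal_mono ?_ h
      rintro x ⟨hx, z, hz, hzx⟩
      rwa [← hbij.injOn (hZ hz) hx hzx]
    refine ideal_mono ?_ h2
    rintro _ ⟨z, hz, rfl⟩
    exact ⟨hbij.mapsTo (hZ hz), z, hz, rfl⟩
  set C := {A ∈ 𝒜 | (A ∩ X).Infinite} with hC
  have hXinf : X.Infinite := by
    intro hfin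
    apply hX
    refine ⟨∅, by simp, ?_⟩
    simpa using hfin
  -- X belongs to the star family
  have hCinf : C.Infinite := by
    intro hfin
    have hZ : X ∩ ⋃₀ C ∈ idealGen 𝒜 := by
      refine ideal_of_finite C hfin (fun A hA => hA.1) ?_
      convert finite_empty
      rw [sdiff_eq_empty]
      exact inter_subset_right
    obtain ⟨G, hG, hGf⟩ := key2 _ inter_subset_left hZ
    obtain ⟨Q, hQQ, hQn⟩ := hQ.1.exists_notMem_finset (G ∪ GB)
    rw [Finset.mem_union, not_or] at hQn
    have hQZ : (Q ∩ f '' (X ∩ ⋃₀ C)).Finite := ad_not_mem (part_ad hQ) G hG hQQ hQn.1 hGf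
    have hQB : (Q ∩ Bᶜ).Finite := ad_not_mem (part_ad hQ) GB hGB hQQ hQn.2 hGBf
    have hW : X ∩ f ⁻¹' Q ∈ idealGen 𝒜 := by
      rw [key]
      refine ideal_of_finite {Q} (finite_singleton Q) (by simpa using hQQ) ?_
      convert finite_empty
      rw [sUnion_singleton, sdiff_eq_empty]
      exact inter_subset_right
    obtain ⟨H, hH, hHf⟩ := hW
    have hWZ : ((X ∩ f ⁻¹' Q) \ ⋃₀ C).Finite := by
      have h3 : (⋃ A ∈ {A | A ∈ H ∧ A ∉ C}, A ∩ X).Finite := by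
        refine (H.finite_toSet.subset (fun A hA => hA.1)).biUnion ?_
        rintro A ⟨hA, hAC⟩
        by_contra hc
        exact hAC ⟨hH hA, hc⟩
      refine (hHf.union h3).subset ?_
      rintro x ⟨hx, hxC⟩
      by_cases hc : x ∈ ⋃₀ (↑H : Set (Set ℕ))
      · right
        obtain ⟨A, hA, hxA⟩ := hc
        refine mem_biUnion (x := A) ⟨hA, fun hAC => hxC ⟨A, hAC, hxA⟩⟩ ⟨hxA, hx.1⟩
      · exact Or.inl ⟨hx, hc⟩
    refine hQ.2.1 Q hQQ (((hQZ.union hQB).union (hWZ.image f)).subset ?_)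
    intro y hy
    by_cases hyB : y ∈ B
    · obtain ⟨x, hx, rfl⟩ := hbij.surjOn hyB
      by_cases hxC : x ∈ ⋃₀ C
      · exact Or.inl (Or.inl ⟨hy, x, ⟨hx, hxC⟩, rfl⟩)
      · exact Or.inr ⟨x, ⟨⟨hx, hy⟩, hxC⟩, rfl⟩
    · exact Or.inl (Or.inr ⟨hy, hyB⟩)
  have hcard := hbig X ⟨hXinf, hCinf⟩
  have hcount : C.Countable := by
    have hsub : C ⊆ ⋃ F ∈ {F : Set (Set ℕ) | F.Finite ∧ F ⊆ 𝒬},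
        {A ∈ C | (f '' (A ∩ X) \ ⋃₀ F).Finite} := by
      intro A hA
      have : A ∩ X ∈ idealGen 𝒜 := by
        refine ideal_of_finite {A} (finite_singleton A) (by simpa using hA.1) ?_
        convert finite_empty
        rw [sdiff_eq_empty]
        simp
      obtain ⟨G, hG, hGf⟩ := key2 _ inter_subset_right this
      exact mem_biUnion (x := (↑G : Set (Set ℕ))) ⟨G.finite_toSet, hG⟩ ⟨hA, hGf⟩
    refine Countable.mono hsub ?_
    refine (countable_setOf_finite_subset (part_countable hQ)).biUnion ?_
    rintro F ⟨hF, hFQ⟩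
    have hW : X ∩ f ⁻¹' (⋃₀ F) ∈ idealGen 𝒜 := by
      rw [key]
      refine ideal_of_finite F hF hFQ ?_
      convert finite_empty
      rw [sdiff_eq_empty]
      exact inter_subset_right
    obtain ⟨H, hH, hHf⟩ := hW
    refine (H.finite_toSet.subset ?_).countable
    rintro A ⟨hA, hAf⟩
    by_contra hc
    have h1 := ad_not_mem h𝒜 H hH hA.1 hc hHf
    have h2 : ((A ∩ X) ∩ f ⁻¹' (f '' (A ∩ X) \ ⋃₀ F)).Finite := by
      refine Finite.of_finite_image (f := f) (hAf.subset ?_)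
        (hbij.injOn.mono (fun x hx => hx.1.2))
      rintro _ ⟨x, hx, rfl⟩
      exact hx.2
    refine hA.2 ((h1.union h2).subset ?_)
    rintro x ⟨hxA, hxX⟩
    by_cases hxF : f x ∈ ⋃₀ F
    · exact Or.inl ⟨hxA, hxX, hxF⟩
    · exact Or.inr ⟨⟨hxA, hxX⟩, ⟨x, ⟨hxA, hxX⟩, rfl⟩, hxF⟩
  have h4 := hcount.le_aleph0
  rw [hcard] at h4
  exact absurd Cardinal.aleph0_lt_continuum (not_lt.2 h4)

/-- For a completely separable NMAD family `𝒜` of size continuum as described,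
`S_𝒬 ≤_RK S_𝒜` but not `S_𝒬 ≤_TU S_𝒜`. -/
theorem statement11 (𝒜 : Set (Set ℕ)) (h𝒜 : IsNMAD 𝒜) (hsep : CompletelySeparable 𝒜)
    (hcard : Cardinal.mk ↥𝒜 = Cardinal.continuum)
    (hbig : ∀ M ∈ starFam 𝒜, Cardinal.mk ↥{A ∈ 𝒜 | (A ∩ M).Infinite} = Cardinal.continuum)
    (A : ℕ → Set ℕ) (hmem : ∀ n, A n ∈ 𝒜) (hinj : Function.Injective A)
    (hdisj : ∀ m n : ℕ, m ≠ n → A m ∩ A n = ∅) (hcov : (⋃ n, A n) = Set.univ) :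
    ∀ 𝒬 : Set (Set ℕ), IsInfPartition 𝒬 →
      RKle (SFam 𝒬) (SFam 𝒜) ∧ ¬ TUle (SFam 𝒬) (SFam 𝒜) := by
  intro 𝒬 hQ
  exact ⟨rk_part 𝒜 h𝒜.1 A hmem hinj hdisj hcov 𝒬 hQ, tu_part 𝒜 h𝒜.1 hbig 𝒬 hQ⟩
end

section
/- Let (𝒜_ξ)_{ξ ∈ I} be a family of AD-families on ℕ indexed by a set I of cardinality at most 𝔠. Then there is an AD-family 𝒞 on ℕ such that F_{𝒜_ξ} <_RK F_𝒞 for every ξ ∈ I. -/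
open Set

/-- The `n`-th element of the branch attached to `c` and the set `B`. -/
noncomputable def brSeq (r : ℕ → ℕ) (B : Set ℕ) (n : ℕ) : ℕ :=
  Nat.pair n (Nat.pair (r n) (Nat.nth (fun x => x ∈ B) n))

lemma brSeq_inj (r : ℕ → ℕ) (B : Set ℕ) : Function.Injective (brSeq r B) := by
  intro m n h
  exact (Nat.pair_eq_pair.1 h).1

lemma brSeq_diff (r : ℕ → ℕ) (B F : Set ℕ) :
    (range (brSeq r B) \ F).Finite ↔ {n | brSeq r B n ∉ F}.Finite := by
  have : range (brSeq r B) \ F = brSeq r B '' {n | brSeq r B n ∉ F} := by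
    ext x; constructor
    · rintro ⟨⟨n, rfl⟩, h⟩; exact ⟨n, h, rfl⟩
    · rintro ⟨n, h, rfl⟩; exact ⟨⟨n, rfl⟩, h⟩
  rw [this, Set.finite_image_iff (brSeq_inj r B).injOn]

lemma nth_finite {B : Set ℕ} (hB : B.Infinite) (A : Set ℕ) :
    {n | Nat.nth (fun x => x ∈ B) n ∉ A}.Finite ↔ (B \ A).Finite := by
  have : B \ A = Nat.nth (fun x => x ∈ B) '' {n | Nat.nth (fun x => x ∈ B) n ∉ A} := by
    ext x; constructor
    · rintro ⟨hx, h⟩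
      have hx' : x ∈ range (Nat.nth (fun x => x ∈ B)) := by
        rw [Nat.range_nth_of_infinite (p := fun x => x ∈ B) hB]; exact hx
      obtain ⟨n, rfl⟩ := hx'
      exact ⟨n, h, rfl⟩
    · rintro ⟨n, h, rfl⟩; exact ⟨Nat.nth_mem_of_infinite hB n, h⟩
  rw [this, Set.finite_image_iff (Nat.nth_injective (p := fun x => x ∈ B) hB).injOn]

lemma brSeq_inter (r r' : ℕ → ℕ) (B B' : Set ℕ) (h : {n | r n = r' n}.Finite) :
    (range (brSeq r B) ∩ range (brSeq r' B')).Finite := by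
  refine (h.image (brSeq r B)).subset ?_
  rintro x ⟨⟨n, rfl⟩, ⟨m, hm⟩⟩
  have h1 := Nat.pair_eq_pair.1 hm
  have h2 := Nat.pair_eq_pair.1 h1.2
  refine ⟨n, ?_, rfl⟩
  have := h1.1
  subst this
  exact h2.1.symm

lemma brSeq_inter' (r : ℕ → ℕ) (B B' : Set ℕ) (hB : B.Infinite) (hB' : B'.Infinite)
    (h : (B ∩ B').Finite) :
    (range (brSeq r B) ∩ range (brSeq r B')).Finite := by
  have h0 : (B \ B'ᶜ).Finite := by simpa [Set.diff_eq] using h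
  refine (((nth_finite hB B'ᶜ).2 h0).image (brSeq r B)).subset ?_
  rintro x ⟨⟨n, rfl⟩, ⟨m, hm⟩⟩
  have h1 := Nat.pair_eq_pair.1 hm
  have h2 := Nat.pair_eq_pair.1 h1.2
  refine ⟨n, ?_, rfl⟩
  have := h1.1
  subst this
  simp only [mem_setOf_eq, mem_compl_iff, not_not]
  rw [← h2.2]
  exact Nat.nth_mem_of_infinite hB' _

lemma exists_branches (K : Type) (hK : Cardinal.mk K ≤ Cardinal.continuum) :
    ∃ r : K → ℕ → ℕ, ∀ k l, k ≠ l → {n | r k n = r l n}.Finite := by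
  have h1 : Cardinal.mk K ≤ Cardinal.mk (ℕ → Bool) := by simpa using hK
  obtain ⟨c⟩ := h1
  refine ⟨fun k n => Encodable.encode ((List.range n).map (c k)), fun k l hkl => ?_⟩
  have : ∃ i, c k i ≠ c l i := by
    by_contra! h
    exact hkl (c.injective (funext h))
  obtain ⟨i, hi⟩ := this
  refine (Set.finite_Iic i).subset fun n hn => ?_
  simp only [mem_setOf_eq, Encodable.encode_inj] at hn
  by_contra hlt
  simp only [mem_Iic, not_le] at hlt
  exact hi (List.map_inj_left.1 hn i (List.mem_range.2 hlt))

/-- For any family of at most continuum many AD-families there is an AD-family `𝒞` with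
`F_{𝒜_ξ} <_RK F_𝒞` for every `ξ`. -/
theorem statement12 (I : Type) (hI : Cardinal.mk I ≤ Cardinal.continuum)
    (𝒜 : I → Set (Set ℕ)) (h𝒜 : ∀ ξ : I, IsADFamily (𝒜 ξ)) :
    ∃ 𝒞 : Set (Set ℕ), IsADFamily 𝒞 ∧ ∀ ξ : I, RKlt (FFam (𝒜 ξ)) (FFam 𝒞) := by
  classical
  have hK : Cardinal.mk (I ⊕ ((I × (ℕ → ℕ)) ⊕ ℕ)) ≤ Cardinal.continuum := by
    have h2 : Cardinal.mk (ℕ → ℕ) = Cardinal.continuum := by simp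
    simp only [Cardinal.mk_sum, Cardinal.mk_prod, Cardinal.lift_id, h2, Cardinal.mk_nat]
    refine Cardinal.add_le_of_le Cardinal.aleph0_le_continuum hI
      (Cardinal.add_le_of_le Cardinal.aleph0_le_continuum ?_ Cardinal.aleph0_le_continuum)
    exact (mul_le_mul_left hI _).trans Cardinal.continuum_mul_self.le
  obtain ⟨r, hr⟩ := exists_branches _ hK
  let D : I × (ℕ → ℕ) → Set ℕ := fun y => range (brSeq (r (Sum.inr (Sum.inl y))) univ)
  -- the index set of the family
  let T : Set ((I ⊕ ((I × (ℕ → ℕ)) ⊕ ℕ)) × Set ℕ) := {p |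
    (∃ ξ, p.1 = Sum.inl ξ ∧ p.2 ∈ 𝒜 ξ) ∨
    (∃ y : I × (ℕ → ℕ), p.1 = Sum.inr (Sum.inl y) ∧ p.2 = univ ∧
      (D y)ᶜ ∈ mapFilter y.2 (FFam (𝒜 y.1))) ∨
    (∃ m : ℕ, p.1 = Sum.inr (Sum.inr m) ∧ p.2 = univ)}
  let Cs : ((I ⊕ ((I × (ℕ → ℕ)) ⊕ ℕ)) × Set ℕ) → Set ℕ := fun p => range (brSeq (r p.1) p.2)
  have hCinf : ∀ p, (Cs p).Infinite := fun p => Set.infinite_range_of_injective (brSeq_inj _ _)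
  have hTinf : ∀ p ∈ T, p.2.Infinite := by
    rintro ⟨k, B⟩ (⟨ξ, h1, h2⟩ | ⟨y, h1, h2, h3⟩ | ⟨m, h1, h2⟩)
    · exact (h𝒜 ξ).2.1 _ h2
    · simp only at h2; subst h2; exact Set.infinite_univ
    · simp only at h2; subst h2; exact Set.infinite_univ
  refine ⟨Cs '' T, ⟨?_, ?_, ?_⟩, fun ξ => ⟨?_, ?_⟩⟩
  · refine (Set.infinite_range_of_injective
      (f := fun m : ℕ => Cs (Sum.inr (Sum.inr m), univ)) ?_).mono ?_
    · intro m n h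
      by_contra hmn
      have := brSeq_inter (r (Sum.inr (Sum.inr m))) (r (Sum.inr (Sum.inr n))) univ univ
        (hr _ _ (by simpa using hmn))
      change (Cs (Sum.inr (Sum.inr m), univ) ∩ Cs (Sum.inr (Sum.inr n), univ)).Finite at this
      simp only at h
      rw [h, inter_self] at this
      exact hCinf _ this
    · rintro _ ⟨m, rfl⟩
      exact ⟨_, Or.inr (Or.inr ⟨m, rfl, rfl⟩), rfl⟩
  · rintro _ ⟨p, _, rfl⟩; exact hCinf p
  · rintro _ ⟨⟨k, B⟩, hp, rfl⟩ _ ⟨⟨l, B'⟩, hq, rfl⟩ hne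
    by_cases hkl : k = l
    · subst hkl
      have hBB : B ≠ B' := by rintro rfl; exact hne rfl
      refine brSeq_inter' _ _ _ (hTinf _ hp) (hTinf _ hq) ?_
      rcases hp with ⟨ξ, h1, h2⟩ | ⟨y, h1, h2, h3⟩ | ⟨m, h1, h2⟩ <;>
      rcases hq with ⟨ξ', h1', h2'⟩ | ⟨y', h1', h2', h3'⟩ | ⟨m', h1', h2'⟩ <;>
      simp only at h1 h2 h1' h2' <;> subst h1 <;> simp at h1'
      · subst h1'; exact (h𝒜 _).2.2 _ h2 _ h2' hBB
      · exact absurd (h2.trans h2'.symm) hBB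
      · exact absurd (h2.trans h2'.symm) hBB
    · exact brSeq_inter _ _ _ _ (hr _ _ hkl)
  · obtain ⟨E, hE⟩ := (h𝒜 ξ).1.nonempty
    have hEi := (h𝒜 ξ).2.1 E hE
    let f : ℕ → ℕ := fun x =>
      if x.unpair.2.unpair.1 = r (Sum.inl ξ) x.unpair.1 then x.unpair.2.unpair.2
      else Nat.nth (fun x => x ∈ E) x.unpair.1
    have hf : ∀ k B n, f (brSeq (r k) B n) = if r k n = r (Sum.inl ξ) n then
        Nat.nth (fun x => x ∈ B) n else Nat.nth (fun x => x ∈ E) n := by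
      intro k B n
      simp [f, brSeq]
    refine ⟨f, fun v => ⟨Nat.pair 0 (Nat.pair (r (Sum.inl ξ) 0) v), by simp [f]⟩, ?_⟩
    ext A
    constructor
    · intro hA B hB
      have := hA (Cs (Sum.inl ξ, B)) ⟨_, Or.inl ⟨ξ, rfl, hB⟩, rfl⟩
      rw [brSeq_diff] at this
      simp only [mem_preimage, hf, if_true] at this
      exact (nth_finite ((h𝒜 ξ).2.1 B hB) A).1 this
    · rintro hA _ ⟨⟨k, B⟩, hp, rfl⟩
      rw [brSeq_diff]
      simp only [mem_preimage, hf]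
      by_cases hk : k = Sum.inl ξ
      · subst hk
        simp only [if_true]
        have hB : B ∈ 𝒜 ξ := by
          rcases hp with ⟨ξ', h1, h2⟩ | ⟨y, h1, h2, h3⟩ | ⟨m, h1, h2⟩ <;> simp at h1
          subst h1; exact h2
        exact (nth_finite ((h𝒜 ξ).2.1 B hB) A).2 (hA B hB)
      · refine ((hr _ _ hk).union ((nth_finite hEi A).2 (hA E hE))).subset fun n hn => ?_
        by_cases h : r k n = r (Sum.inl ξ) n
        · exact Or.inl h
        · right
          simpa [h] using hn
  · rintro ⟨f, -, hf⟩
    let y : I × (ℕ → ℕ) := (ξ, f)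
    by_cases hy : (D y)ᶜ ∈ mapFilter f (FFam (𝒜 ξ))
    · have h1 : (D y)ᶜ ∈ FFam (Cs '' T) := hf ▸ hy
      have h2 := h1 (D y) ⟨(Sum.inr (Sum.inl y), univ), Or.inr (Or.inl ⟨y, rfl, rfl, hy⟩), rfl⟩
      rw [Set.diff_eq, compl_compl, inter_self] at h2
      exact hCinf (Sum.inr (Sum.inl y), univ) h2
    · apply hy
      rw [hf]
      rintro _ ⟨⟨k, B⟩, hp, rfl⟩
      rw [Set.diff_eq, compl_compl]
      have hk : k ≠ Sum.inr (Sum.inl y) := by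
        rintro rfl
        rcases hp with ⟨ξ', h1, h2⟩ | ⟨y', h1, h2, h3⟩ | ⟨m, h1, h2⟩ <;> simp at h1
        subst h1
        exact hy h3
      exact brSeq_inter _ _ _ _ (hr _ _ hk)
end

section
/- For every FU-filter F on ℕ there is a transfinite sequence (G_α) of FU-filters, indexed by the ordinals α below the initial ordinal of 𝔠⁺ (the cardinal successor of the continuum), such that F <_RK G_α for every α and G_α <_RK G_β whenever α < β. -/
open Set

/-- The filter of a nonempty family of infinite sets is a free FU-filter. -/
lemma FFam_good (𝒟 : Set (Set ℕ)) (hne : 𝒟.Nonempty) (hinf : ∀ D ∈ 𝒟, D.Infinite) :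
    IsFreeFilter (FFam 𝒟) ∧ IsFUFilter (FFam 𝒟) := by
  refine ⟨⟨⟨?_, ?_, ?_⟩, ?_, ?_⟩, ?_⟩
  · intro D _
    simp
  · intro A hA B hAB D hD
    exact (hA D hD).subset (sdiff_subset_sdiff_right hAB)
  · intro A hA B hB D hD
    rw [sdiff_inter]
    exact (hA D hD).union (hB D hD)
  · intro A hA D _
    exact hA.subset (fun x hx => hx.2)
  · intro h
    obtain ⟨D, hD⟩ := hne
    have := h D hD
    rw [sdiff_empty] at this
    exact hinf D hD this
  · intro A hA
    have : ∃ D ∈ 𝒟, ¬ (D \ Aᶜ).Finite := by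
      by_contra! h
      exact hA h
    obtain ⟨D, hD, hDA⟩ := this
    refine ⟨D \ Aᶜ, fun x hx => not_not.1 hx.2, hDA, ?_⟩
    intro B hB
    exact (hB D hD).subset (fun x hx => ⟨hx.1.1, hx.2⟩)

/-- An almost disjoint family of size continuum. -/
lemma exists_AD : ∃ A : (ℕ → Bool) → Set ℕ, (∀ x, (A x).Infinite) ∧
    ∀ x y, x ≠ y → (A x ∩ A y).Finite := by
  let c : (ℕ → Bool) → ℕ → ℕ := fun x n => Encodable.encode ((List.range n).map x)
  have hc : ∀ x y n m, c x n = c y m → n = m ∧ ∀ k < n, x k = y k := by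
    intro x y n m h
    have h1 : (List.range n).map x = (List.range m).map y := Encodable.encode_injective h
    have h2 : n = m := by simpa using congrArg List.length h1
    subst h2
    refine ⟨rfl, fun k hk => ?_⟩
    exact (List.map_inj_left.1 h1) k (List.mem_range.2 hk)
  refine ⟨fun x => range (c x), fun x => ?_, ?_⟩
  · exact infinite_range_of_injective (fun n m h => (hc x x n m h).1)
  · intro x y hxy
    obtain ⟨k, hk⟩ := Function.ne_iff.1 hxy
    refine ((Set.finite_Iic k).image (c x)).subset ?_
    rintro _ ⟨⟨n, rfl⟩, ⟨m, hm⟩⟩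
    refine ⟨n, ?_, rfl⟩
    by_contra hn
    exact hk ((hc x y n m hm.symm).2 k (by simpa using hn))

/-- A family of continuum many independent maps. -/
lemma exists_indep : ∃ p : (ℕ → Bool) → ℕ → ℕ ⊕ ℕ, ∀ (x : ℕ → Bool) (a b : ℕ → ℕ ⊕ ℕ),
    ∃ d : ℕ → ℕ, Function.Injective d ∧ (∀ n, p x (d n) = a n) ∧
      ∀ y, y ≠ x → ∀ᶠ n in Filter.cofinite, p y (d n) = b n := by
  classical
  let X := Σ n : ℕ, ((Fin n → Bool) → ℕ ⊕ ℕ)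
  have : Infinite X := Infinite.of_injective
    (fun n : ℕ => (⟨n, fun _ => Sum.inl 0⟩ : X)) (fun n m h => congrArg Sigma.fst h)
  obtain ⟨e⟩ : Nonempty (X ≃ ℕ) := nonempty_equiv_of_countable
  let q : (ℕ → Bool) → X → ℕ ⊕ ℕ := fun y u => u.2 (fun i => y i)
  refine ⟨fun y m => q y (e.symm m), fun x a b => ?_⟩
  let u : ℕ → X := fun n => ⟨n, fun t => if t = (fun i : Fin n => x i) then a n else b n⟩
  refine ⟨fun n => e (u n), ?_, ?_, ?_⟩
  · intro n m h
    exact congrArg Sigma.fst (e.injective h)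
  · intro n
    simp [q, u]
  · intro y hy
    obtain ⟨k, hk⟩ := Function.ne_iff.1 hy
    rw [Filter.eventually_cofinite]
    refine (Set.finite_Iic k).subset ?_
    intro n hn
    by_contra hkn
    have hkn : k < n := by simpa using hkn
    apply hn
    have : ¬ ((fun i : Fin n => y i) = (fun i : Fin n => x i)) := by
      intro h
      exact hk (congrFun h ⟨k, hkn⟩)
    simp [q, u, this]

lemma conv_eventually {S : Set ℕ} {F : Set (Set ℕ)} (h : ConvTo S F) {t : ℕ → ℕ}
    (ht : Function.Injective t) (hS : ∀ n, t n ∈ S) {A : Set ℕ} (hA : A ∈ F) :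
    ∀ᶠ n in Filter.cofinite, t n ∈ A := by
  rw [Filter.eventually_cofinite]
  exact ((h.2 A hA).preimage ht.injOn).subset (fun n hn => ⟨hS n, hn⟩)

/-- Continuum many FU-filters have a common FU upper bound. -/
lemma exists_ub {ι : Type*} [Nonempty ι] (hι : Cardinal.mk ι ≤ Cardinal.continuum)
    (F : ι → Set (Set ℕ)) (hF : ∀ i, IsFreeFilter (F i) ∧ IsFUFilter (F i)) :
    ∃ G : Set (Set ℕ), (IsFreeFilter G ∧ IsFUFilter G) ∧ ∀ i, RKle (F i) G := by
  obtain ⟨p, hp⟩ := exists_indep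
  obtain ⟨j, hj⟩ : ∃ j : ι → (ℕ → Bool), Function.Injective j := by
    have : Cardinal.lift.{0} (Cardinal.mk ι) ≤ Cardinal.lift (Cardinal.mk (ℕ → Bool)) := by
      simpa using hι
    obtain ⟨f⟩ := Cardinal.lift_mk_le'.1 this
    exact ⟨f, f.injective⟩
  have hseq : ∀ i, ∀ A, A ∉ F i → ∃ S t, ConvTo S (F i) ∧ Function.Injective t ∧
      (∀ n : ℕ, t n ∈ S) ∧ ∀ n, t n ∉ A := by
    intro i A hA
    obtain ⟨S, hSA, hS⟩ := (hF i).2 Aᶜ (by rwa [compl_compl])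
    refine ⟨S, fun n => hS.1.natEmbedding S n, hS, ?_, fun n => Subtype.prop _, fun n =>
      hSA (Subtype.prop _)⟩
    intro n m h
    exact (hS.1.natEmbedding S).injective (Subtype.ext h)
  have hs0 := fun i => hseq i ∅ (hF i).1.2.2
  choose S s hS hsinj hsS _ using hs0
  let f : ι → ℕ → ℕ := fun i m => Sum.elim (s i) id (p (j i) m)
  let 𝒟 : Set (Set ℕ) := {D | D.Infinite ∧ ∀ i, ∀ A ∈ F i, (D \ f i ⁻¹' A).Finite}
  have key : ∀ i A, A ∉ F i → ∃ D ∈ 𝒟, ∀ m ∈ D, f i m ∉ A := by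
    intro i A hA
    obtain ⟨T, t, hT, htinj, htT, htA⟩ := hseq i A hA
    obtain ⟨d, hd, hda, hdb⟩ := hp (j i) (fun n => Sum.inr (t n)) (fun n => Sum.inl n)
    refine ⟨range d, ⟨infinite_range_of_injective hd, ?_⟩, ?_⟩
    · intro k B hB
      have hev : ∀ᶠ n in Filter.cofinite, f k (d n) ∈ B := by
        by_cases hk : k = i
        · subst hk
          filter_upwards [conv_eventually hT htinj htT hB] with n hn
          simpa [f, hda n] using hn
        · filter_upwards [hdb (j k) (fun h => hk (hj h)),
            conv_eventually (hS k) (hsinj k) (hsS k) hB] with n h1 hn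
          simpa [f, h1] using hn
      rw [Filter.eventually_cofinite] at hev
      refine (hev.image d).subset ?_
      rintro _ ⟨⟨n, rfl⟩, hn⟩
      exact ⟨n, hn, rfl⟩
    · rintro _ ⟨n, rfl⟩
      simpa [f, hda n] using htA n
  refine ⟨FFam 𝒟, FFam_good 𝒟 ?_ (fun D hD => hD.1), fun i => ⟨f i, ?_, ?_⟩⟩
  · obtain ⟨i⟩ := ‹Nonempty ι›
    obtain ⟨D, hD, _⟩ := key i ∅ (hF i).1.2.2
    exact ⟨D, hD⟩
  · intro m
    obtain ⟨d, _, hda, _⟩ := hp (j i) (fun n => Sum.inr m) (fun n => Sum.inl n)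
    exact ⟨d 0, by simp [f, hda 0]⟩
  · ext A
    constructor
    · intro h
      by_contra hA
      obtain ⟨D, hD, hDA⟩ := key i A hA
      exact hD.1 ((h D hD).subset (fun m hm => ⟨hm, hDA m hm⟩))
    · intro hA D hD
      exact hD.2 i A hA

/-- There are more than continuum many FU-filters, so some is not below any of the given ones. -/
lemma exists_not_below {ι : Type*} [Nonempty ι] (hι : Cardinal.mk ι ≤ Cardinal.continuum)
    (F : ι → Set (Set ℕ)) :
    ∃ K : Set (Set ℕ), (IsFreeFilter K ∧ IsFUFilter K) ∧
      ∀ i (f : ℕ → ℕ), mapFilter f (F i) ≠ K := by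
  obtain ⟨A, hAinf, hAD⟩ := exists_AD
  obtain ⟨e, he⟩ : ∃ e : (ℕ → Bool) → ι × (ℕ → ℕ), Function.Surjective e := by
    have h1 : Cardinal.mk (ι × (ℕ → ℕ)) ≤ Cardinal.continuum := by
      rw [Cardinal.mk_prod]
      refine Cardinal.mul_le_of_le Cardinal.aleph0_le_continuum ?_ ?_
      · simpa using hι
      · simp
    have : Cardinal.lift.{0} (Cardinal.mk (ι × (ℕ → ℕ))) ≤
        Cardinal.lift (Cardinal.mk (ℕ → Bool)) := by
      simpa using h1
    obtain ⟨g⟩ := Cardinal.lift_mk_le'.1 this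
    exact ⟨Function.invFun g, Function.invFun_surjective g.injective⟩
  let cons : Bool → (ℕ → Bool) → (ℕ → Bool) := fun b x n => Nat.casesOn n b x
  have hcons : ∀ x y, cons true x = cons true y → x = y := by
    intro x y h
    funext n
    exact congrFun h (n + 1)
  have hcons' : ∀ x y, cons true x ≠ cons false y := by
    intro x y h
    exact Bool.noConfusion (congrFun h 0)
  let H : (ℕ → Bool) → Set (Set ℕ) := fun c => mapFilter (e c).2 (F (e c).1)
  let z : ℕ → Bool := fun _ => false
  let 𝒟 : Set (Set ℕ) := insert (A (cons false z))
    {D | ∃ c, (A (cons true c))ᶜ ∈ H c ∧ D = A (cons true c)}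
  refine ⟨FFam 𝒟, FFam_good 𝒟 ⟨_, mem_insert _ _⟩ ?_, ?_⟩
  · rintro D (rfl | ⟨c, _, rfl⟩) <;> exact hAinf _
  · intro i f h
    obtain ⟨c, hc⟩ := he (i, f)
    have hH : H c = FFam 𝒟 := by
      simp only [H, hc]
      exact h
    by_cases hm : (A (cons true c))ᶜ ∈ H c
    · have h1 : (A (cons true c))ᶜ ∈ FFam 𝒟 := hH ▸ hm
      have h2 := h1 (A (cons true c)) (Or.inr ⟨c, hm, rfl⟩)
      refine hAinf (cons true c) (h2.subset (fun m hm => ⟨hm, fun h => h hm⟩))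
    · apply hm
      rw [hH]
      rintro D (rfl | ⟨c', hc', rfl⟩)
      · rw [sdiff_compl]
        exact hAD _ _ (hcons' _ _).symm
      · rw [sdiff_compl]
        refine hAD _ _ (fun h => ?_)
        rw [hcons _ _ h] at hc'
        exact hm hc'

lemma exists_strict_ub {ι : Type*} [Nonempty ι] (hι : Cardinal.mk ι ≤ Cardinal.continuum)
    (F : ι → Set (Set ℕ)) (hF : ∀ i, IsFreeFilter (F i) ∧ IsFUFilter (F i)) :
    ∃ G : Set (Set ℕ), (IsFreeFilter G ∧ IsFUFilter G) ∧ ∀ i, RKlt (F i) G := by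
  obtain ⟨K, hK, hKF⟩ := exists_not_below hι F
  have hO : Cardinal.mk (Option ι) ≤ Cardinal.continuum := by
    rw [Cardinal.mk_option]
    exact Cardinal.add_le_of_le Cardinal.aleph0_le_continuum hι
      (Cardinal.one_le_aleph0.trans Cardinal.aleph0_le_continuum)
  obtain ⟨G, hG, hle⟩ := exists_ub hO (fun o => Option.elim o K F) (by
    rintro (_ | i)
    · exact hK
    · exact hF i)
  refine ⟨G, hG, fun i => ⟨hle (some i), ?_⟩⟩
  rintro ⟨f, _, hf⟩
  obtain ⟨g, _, hg⟩ := hle none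
  apply hKF i (g ∘ f)
  have hg : mapFilter g G = K := hg
  rw [← hg, ← hf]
  rfl

universe u

lemma card_initial : ∀ a : {α : Ordinal.{u} // α < (Order.succ Cardinal.continuum).ord},
    Cardinal.mk (Option {b // b < a}) ≤ Cardinal.continuum := by
  intro a
  rw [Cardinal.mk_option]
  refine Cardinal.add_le_of_le Cardinal.aleph0_le_continuum ?_
    (Cardinal.one_le_aleph0.trans Cardinal.aleph0_le_continuum)
  have h1 : Cardinal.mk {b // b < a} ≤ Cardinal.mk (Set.Iio a.1) :=
    Cardinal.mk_le_of_injective (f := fun b => ⟨b.1.1, b.2⟩) (by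
      intro b c h
      exact Subtype.ext (Subtype.ext (Subtype.mk.inj h)))
  refine h1.trans ?_
  have h2 : a.1.card ≤ Cardinal.continuum := Order.lt_succ_iff.1 (Cardinal.lt_ord.1 a.2)
  rw [Cardinal.mk_Iio_ordinal]
  exact (Cardinal.lift_le.2 h2).trans_eq Cardinal.lift_continuum

/-- There is a strictly increasing RK-chain of FU-filters of length `𝔠⁺` above any FU-filter. -/
theorem statement13 (F : Set (Set ℕ)) (hfree : IsFreeFilter F) (hFU : IsFUFilter F) :
    ∃ G : {α : Ordinal // α < (Order.succ Cardinal.continuum).ord} → Set (Set ℕ),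
      (∀ a, IsFreeFilter (G a) ∧ IsFUFilter (G a)) ∧
      (∀ a, RKlt F (G a)) ∧
      ∀ a b, a < b → RKlt (G a) (G b) := by
  classical
  let P := {G : Set (Set ℕ) // IsFreeFilter G ∧ IsFUFilter G}
  let F₀ : P := ⟨F, hfree, hFU⟩
  have step : ∀ a : {α : Ordinal // α < (Order.succ Cardinal.continuum).ord},
      ∀ r : (∀ b, b < a → P), ∃ G : P, RKlt F G.1 ∧ ∀ b hb, RKlt (r b hb).1 G.1 := by
    intro a r
    obtain ⟨G, hG, h⟩ := exists_strict_ub (card_initial a)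
      (fun o => (Option.elim o F₀ (fun b => r b.1 b.2)).1) (fun o => (Option.elim o F₀ (fun b => r b.1 b.2)).2)
    exact ⟨⟨G, hG⟩, h none, fun b hb => h (some ⟨b, hb⟩)⟩
  choose φ hφ1 hφ2 using step
  let G := (wellFounded_lt (α := {α : Ordinal // α < (Order.succ Cardinal.continuum).ord})).fix φ
  have hG : ∀ a, G a = φ a (fun b _ => G b) := fun a => WellFounded.fix_eq _ _ _
  refine ⟨fun a => (G a).1, fun a => (G a).2, fun a => ?_, fun a b hab => ?_⟩
  · show RKlt F (G a).1
    rw [hG a]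
    exact hφ1 _ _
  · have := hφ2 b (fun c _ => G c) a hab
    rw [← hG b] at this
    exact this
end

section
/- Let 𝒜 and ℬ be AD-families on ℕ such that the filters F_𝒜 and F_ℬ are FU-filters. If F_ℬ is an α₂-filter and F_𝒜 ≤_RK F_ℬ, then F_𝒜 is an α₂-filter. -/
open Set

/-- An α₂-filter: for every sheaf there is a convergent set meeting every member infinitely. -/
def Alpha2 (F : Set (Set ℕ)) : Prop :=
  ∀ C : ℕ → Set ℕ, (∀ n, ConvTo (C n) F) →
    ∃ B : Set ℕ, ConvTo B F ∧ ∀ n, (C n ∩ B).Infinite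

/-- The α₂ property is downward preserved by the RK-order among FU-filters. -/
theorem statement14 (𝒜 ℬ : Set (Set ℕ)) (h𝒜 : IsADFamily 𝒜) (hℬ : IsADFamily ℬ)
    (hFU𝒜 : IsFUFilter (FFam 𝒜)) (hFUℬ : IsFUFilter (FFam ℬ))
    (hα : Alpha2 (FFam ℬ)) (h : RKle (FFam 𝒜) (FFam ℬ)) : Alpha2 (FFam 𝒜) := by
  obtain ⟨f, -, hf⟩ := h
  have key : ∀ A : Set ℕ, f ⁻¹' A ∈ FFam ℬ ↔ A ∈ FFam 𝒜 := fun A => by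
    rw [← hf]; rfl
  intro C hC
  have hS : ∀ n, ∃ S ⊆ f ⁻¹' (C n), ConvTo S (FFam ℬ) := by
    intro n
    apply hFUℬ
    intro hmem
    have h1 : (C n)ᶜ ∈ FFam 𝒜 := (key _).1 hmem
    have h2 := (hC n).2 _ h1
    rw [Set.diff_compl, Set.inter_self] at h2
    exact (hC n).1 h2
  choose S hSsub hSconv using hS
  obtain ⟨B, hB, hSB⟩ := hα S hSconv
  have hfib : ∀ k, (B ∩ f ⁻¹' {k}).Finite := by
    intro k
    have h1 : ({k}ᶜ : Set ℕ) ∈ FFam 𝒜 := by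
      intro D _
      rw [Set.diff_compl]
      exact (Set.finite_singleton k).inter_of_right D
    have h2 := hB.2 _ ((key _).2 h1)
    rwa [Set.preimage_compl, Set.diff_compl] at h2
  have himg : ∀ T ⊆ B, T.Infinite → (f '' T).Infinite := by
    intro T hT hinf hfin
    apply hinf
    refine (hfin.biUnion (fun k _ => hfib k)).subset ?_
    intro x hx
    simp only [Set.mem_iUnion]
    exact ⟨f x, Set.mem_image_of_mem f hx, hT hx, rfl⟩
  refine ⟨f '' B, ⟨himg B subset_rfl hB.1, ?_⟩, ?_⟩
  · intro A hA
    refine ((hB.2 _ ((key A).2 hA)).image f).subset ?_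
    rintro _ ⟨⟨x, hx, rfl⟩, hxA⟩
    exact ⟨x, ⟨hx, hxA⟩, rfl⟩
  · intro n
    refine (himg _ Set.inter_subset_right (hSB n)).mono ?_
    rintro _ ⟨x, ⟨hxS, hxB⟩, rfl⟩
    exact ⟨hSsub n hxS, x, hxB, rfl⟩
end

section
/- Let 𝒜 and ℬ be AD-families on ℕ such that the filters F_𝒜 and F_ℬ are FU-filters. If F_ℬ is an α₃-filter and F_𝒜 ≤_RK F_ℬ, then F_𝒜 is an α₃-filter. -/
open Set

/-- An α₃-filter: for every sheaf there is a convergent set meeting infinitely many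
members infinitely. -/
def Alpha3 (F : Set (Set ℕ)) : Prop :=
  ∀ C : ℕ → Set ℕ, (∀ n, ConvTo (C n) F) →
    ∃ B : Set ℕ, ConvTo B F ∧ {n : ℕ | (C n ∩ B).Infinite}.Infinite

/-- The α₃ property is downward preserved by the RK-order among FU-filters. -/
theorem statement15 (𝒜 ℬ : Set (Set ℕ)) (h𝒜 : IsADFamily 𝒜) (hℬ : IsADFamily ℬ)
    (hFU𝒜 : IsFUFilter (FFam 𝒜)) (hFUℬ : IsFUFilter (FFam ℬ))
    (hα : Alpha3 (FFam ℬ)) (h : RKle (FFam 𝒜) (FFam ℬ)) : Alpha3 (FFam 𝒜) := by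
  obtain ⟨f, -, hf⟩ := h
  have key : ∀ S, (∀ A ∈ FFam ℬ, (S \ A).Finite) → ∀ T ⊆ S, T.Infinite → (f '' T).Infinite := by
    intro S hS T hTS hT hfin
    have hmem : (f '' T)ᶜ ∈ FFam 𝒜 := by
      intro D _
      refine hfin.subset ?_
      rintro x ⟨_, hx⟩
      simpa using hx
    rw [← hf] at hmem
    refine hT ((hS _ hmem).subset ?_)
    intro x hx
    exact ⟨hTS hx, fun h => h ⟨x, hx, rfl⟩⟩
  intro C hC
  have hS : ∀ n, ∃ S ⊆ f ⁻¹' (C n), ConvTo S (FFam ℬ) := by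
    intro n
    apply hFUℬ
    intro hmem
    have h2 : (C n)ᶜ ∈ FFam 𝒜 := by
      rw [← hf]
      exact hmem
    refine (hC n).1 (((hC n).2 _ h2).subset ?_)
    intro x hx
    exact ⟨hx, fun h => h hx⟩
  choose S hSC hSconv using hS
  obtain ⟨B, hB, hinf⟩ := hα S hSconv
  refine ⟨f '' B, ⟨key B hB.2 B subset_rfl hB.1, ?_⟩, hinf.mono ?_⟩
  · intro A hA
    rw [← hf] at hA
    refine ((hB.2 _ hA).image f).subset ?_
    rintro _ ⟨⟨x, hx, rfl⟩, hxA⟩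
    exact ⟨x, ⟨hx, hxA⟩, rfl⟩
  · intro n hn
    refine (key B hB.2 (S n ∩ B) inter_subset_right hn).mono ?_
    rintro _ ⟨x, ⟨hxS, hxB⟩, rfl⟩
    exact ⟨hSC n hxS, x, hxB, rfl⟩
end

section
/- Let 𝒜 and ℬ be AD-families on ℕ such that the filters F_𝒜 and F_ℬ are FU-filters. If F_ℬ is an α₄-filter and F_𝒜 ≤_RK F_ℬ, then F_𝒜 is an α₄-filter. -/
open Set

/-- An α₄-filter: for every sheaf there is a convergent set meeting infinitely many members. -/
def Alpha4 (F : Set (Set ℕ)) : Prop :=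
  ∀ C : ℕ → Set ℕ, (∀ n, ConvTo (C n) F) →
    ∃ B : Set ℕ, ConvTo B F ∧ {n : ℕ | (C n ∩ B).Nonempty}.Infinite

/-- The α₄ property is downward preserved by the RK-order among FU-filters. -/
theorem statement16 (𝒜 ℬ : Set (Set ℕ)) (h𝒜 : IsADFamily 𝒜) (hℬ : IsADFamily ℬ)
    (hFU𝒜 : IsFUFilter (FFam 𝒜)) (hFUℬ : IsFUFilter (FFam ℬ))
    (hα : Alpha4 (FFam ℬ)) (h : RKle (FFam 𝒜) (FFam ℬ)) : Alpha4 (FFam 𝒜) := by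
  obtain ⟨f, -, hf⟩ := h
  have key : ∀ A, A ∈ FFam 𝒜 ↔ f ⁻¹' A ∈ FFam ℬ := by
    intro A
    rw [← hf]
    rfl
  intro C hC
  have hS : ∀ n, ∃ S ⊆ f ⁻¹' (C n), ConvTo S (FFam ℬ) := by
    intro n
    apply hFUℬ
    intro hmem
    have h1 : (C n)ᶜ ∈ FFam 𝒜 := (key _).2 hmem
    have h2 := (hC n).2 _ h1
    rw [sdiff_compl, Set.inter_self] at h2
    exact (hC n).1 h2
  choose S hSC hSc using hS
  obtain ⟨B, hB, hinf⟩ := hα S hSc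
  refine ⟨f '' B, ⟨?_, ?_⟩, ?_⟩
  · intro hfin
    have h1 : (f '' B)ᶜ ∈ FFam 𝒜 := by
      intro D _
      refine hfin.subset ?_
      intro x hx
      by_contra hne
      exact hx.2 hne
    have h2 := hB.2 _ ((key _).1 h1)
    refine hB.1 (h2.subset ?_)
    intro x hx
    exact ⟨hx, fun hn => hn ⟨x, hx, rfl⟩⟩
  · intro A hA
    refine ((hB.2 _ ((key A).1 hA)).image f).subset ?_
    rintro _ ⟨⟨x, hx, rfl⟩, hxA⟩
    exact ⟨x, ⟨hx, hxA⟩, rfl⟩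
  · refine hinf.mono ?_
    rintro n ⟨x, hxS, hxB⟩
    exact ⟨f x, hSC n hxS, x, hxB, rfl⟩
end

section
/- For every NMAD-family 𝒜 on ℕ and every partition 𝒫 of ℕ into infinitely many infinite sets, it is not the case that F_𝒜 ≤_RK S_𝒫; that is, there is no surjection f : ℕ → ℕ with f[S_𝒫] = F_𝒜. -/
open Set

/-- For a NMAD family `𝒜` and a partition `𝒬` of `ℕ` into infinitely many infinite sets,
`F_𝒜` is not RK-below `S_𝒬`. -/
theorem statement17 (𝒜 : Set (Set ℕ)) (h𝒜 : IsNMAD 𝒜)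
    (𝒬 : Set (Set ℕ)) (h𝒬 : IsInfPartition 𝒬) :
    ¬ RKle (FFam 𝒜) (SFam 𝒬) := by
  classical
  rintro ⟨f, -, hf⟩
  obtain ⟨⟨hinf, hAinf, hAD⟩, hN⟩ := h𝒜
  obtain ⟨-, hQinf, hQcov, hQdisj⟩ := h𝒬
  have key : ∀ Y : Set ℕ, f ⁻¹' Y ∈ idealGen 𝒬 ↔ ∀ A ∈ 𝒜, (A ∩ Y).Finite := by
    intro Y
    have h : Yᶜ ∈ mapFilter f (SFam 𝒬) ↔ Yᶜ ∈ FFam 𝒜 := by rw [hf]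
    simpa [mapFilter, SFam, FFam, Set.diff_eq] using h
  have hP : ∀ m : ℕ, ∃ P ∈ 𝒬, m ∈ P := fun m => by
    have : m ∈ ⋃₀ 𝒬 := by rw [hQcov]; trivial
    exact this
  choose P hPQ hPm using hP
  have hsurj : ∀ R ∈ 𝒬, ∃ m, P m = R := by
    intro R hR
    obtain ⟨m, hm⟩ := (hQinf R hR).nonempty
    refine ⟨m, ?_⟩
    by_contra hne
    have : m ∈ P m ∩ R := ⟨hPm m, hm⟩
    rw [hQdisj _ (hPQ m) _ hR hne] at this
    exact this
  let W : ℕ → Set ℕ := fun n => {x | ∃ i ≤ n, x ∈ P i}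
  let Y : ℕ → Set ℕ := fun n => {y | ∀ x, f x = y → x ∈ W n}
  have hY : ∀ n, ∀ A ∈ 𝒜, (A ∩ Y n).Finite := by
    intro n
    rw [← key]
    refine ⟨(Finset.range (n+1)).image P, ?_, ?_⟩
    · intro R hR
      simp only [Finset.coe_image, Set.mem_image] at hR
      obtain ⟨i, -, rfl⟩ := hR
      exact hPQ i
    · convert Set.finite_empty
      rw [Set.diff_eq_empty]
      intro x hx
      obtain ⟨i, hi, hxi⟩ := hx x rfl
      exact ⟨P i, by simpa using ⟨i, by omega, rfl⟩, hxi⟩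
  have hYmono : ∀ m n, m ≤ n → Y m ⊆ Y n := by
    intro m n hmn y hy x hx
    obtain ⟨i, hi, h⟩ := hy x hx
    exact ⟨i, hi.trans hmn, h⟩
  have hgen : ∀ B : Set ℕ, (∀ A ∈ 𝒜, (A ∩ B).Finite) → ∃ n, (B \ Y n).Finite := by
    intro B hB
    obtain ⟨𝒮, h𝒮, hfin⟩ := (key B).2 hB
    have : ∃ n, ∀ R ∈ 𝒮, ∃ i ≤ n, P i = R := by
      choose! g hg using hsurj
      exact ⟨𝒮.sup g, fun R hR => ⟨g R, Finset.le_sup hR, hg R (h𝒮 hR)⟩⟩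
    obtain ⟨n, hn⟩ := this
    refine ⟨n, (hfin.image f).subset ?_⟩
    rintro y ⟨hyB, hy⟩
    simp only [Y, Set.mem_setOf_eq, not_forall] at hy
    obtain ⟨x, hx, hxW⟩ := hy
    refine ⟨x, ⟨by simpa [hx] using hyB, ?_⟩, hx⟩
    rintro ⟨R, hR, hxR⟩
    obtain ⟨i, hi, rfl⟩ := hn R hR
    exact hxW ⟨i, hi, hxR⟩
  let a : ℕ → Set ℕ := fun k => (hinf.natEmbedding 𝒜 k : Set ℕ)
  have haA : ∀ k, a k ∈ 𝒜 := fun k => (hinf.natEmbedding 𝒜 k).2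
  have hainj : Function.Injective a :=
    Subtype.val_injective.comp (hinf.natEmbedding 𝒜).injective
  let X : Set ℕ := ⋃ k, a k \ Y k
  have hXY : ∀ n, (X ∩ Y n).Finite := by
    intro n
    refine ((Set.finite_Iio n).biUnion (fun k _ => hY n (a k) (haA k))).subset ?_
    rintro x ⟨hx, hxn⟩
    obtain ⟨k, hk, hkY⟩ := Set.mem_iUnion.1 hx
    refine Set.mem_biUnion (x := k) ?_ ⟨hk, hxn⟩
    by_contra h
    exact hkY (hYmono n k (not_lt.1 h) hxn) |>.elim
  have hX : X ∉ idealGen 𝒜 := by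
    rintro ⟨𝒮, h𝒮, hfin⟩
    obtain ⟨k, hk⟩ : ∃ k, a k ∉ 𝒮 := by
      by_contra! h
      exact Set.infinite_range_of_injective hainj
        (𝒮.finite_toSet.subset (by rintro _ ⟨k, rfl⟩; exact h k))
    have h1 : (⋃ R ∈ (𝒮 : Set (Set ℕ)), a k ∩ R).Finite :=
      𝒮.finite_toSet.biUnion (fun R hR => hAD _ (haA k) _ (h𝒮 hR)
        (by rintro rfl; exact hk hR))
    refine hAinf _ (haA k) (((h1.union hfin).union (hY k _ (haA k))).subset ?_)
    intro x hx
    by_cases hxY : x ∈ Y k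
    · exact Or.inr ⟨hx, hxY⟩
    left
    by_cases hxS : x ∈ ⋃₀ (𝒮 : Set (Set ℕ))
    · obtain ⟨R, hR, hxR⟩ := hxS
      exact Or.inl (Set.mem_biUnion hR ⟨hx, hxR⟩)
    · exact Or.inr ⟨Set.mem_iUnion.2 ⟨k, hx, hxY⟩, hxS⟩
  obtain ⟨B, hBX, hBinf, hB⟩ := hN X hX
  obtain ⟨n, hn⟩ := hgen B (fun A hA => by rw [Set.inter_comm]; exact hB A hA)
  refine hBinf ((hn.union (hXY n)).subset ?_)
  intro x hx
  by_cases hxY : x ∈ Y n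
  · exact Or.inr ⟨hBX hx, hxY⟩
  · exact Or.inl ⟨hx, hxY⟩
end

section
/- For every infinite cardinal κ < 𝔠 there is a family (X_α)_{α ∈ I} of subsets of 2^ω, indexed by a set I of cardinality κ, such that |X_α| = 𝔠 for every α ∈ I and for all distinct α, β ∈ I there is no surjection g : 2^{<ω} → 2^{<ω} with g[S_{𝒜_{X_β}}] = S_{𝒜_{X_α}}; that is, the filters S_{𝒜_{X_α}} form an RK-antichain. -/
open Set

/-- The branch of the Cantor tree `2^{<ω}` determined by `x ∈ 2^ω`:
the set of all initial segments of `x`. -/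
def branch (x : ℕ → Bool) : Set (List Bool) :=
  Set.range (fun n => List.ofFn (fun i : Fin n => x i))

/-! ### Branches -/

lemma s19_branch_inf (x : ℕ → Bool) : (branch x).Infinite := by
  apply Set.infinite_range_of_injective
  intro m n h
  have := congrArg List.length h
  simpa using this

lemma s19_branch_ad {x y : ℕ → Bool} (h : x ≠ y) : (branch x ∩ branch y).Finite := by
  obtain ⟨k, hk⟩ := Function.ne_iff.1 h
  apply Set.Finite.subset
    (Set.finite_range (fun n : Fin (k + 1) => List.ofFn (fun i : Fin n.1 => x i)))
  rintro s ⟨⟨n, rfl⟩, ⟨m, hm⟩⟩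
  have hl : m = n := by
    have := congrArg List.length hm
    simpa using this
  subst hl
  have h2 := List.ofFn_injective hm
  by_cases hmk : m < k + 1
  · exact ⟨⟨m, hmk⟩, rfl⟩
  · exfalso
    have := congrFun h2 ⟨k, by omega⟩
    exact hk this.symm

lemma s19_mem_ideal (X : Set (ℕ → Bool)) (Y : Set (List Bool)) :
    Y ∈ idealGen (branch '' X) ↔
      ∃ F : Finset (ℕ → Bool), ↑F ⊆ X ∧ (Y \ ⋃ x ∈ F, branch x).Finite := by
  classical
  constructor
  · rintro ⟨A, hA, hf⟩
    obtain ⟨F, hF, rfl⟩ := Finset.subset_set_image_iff.1 hA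
    refine ⟨F, hF, ?_⟩
    simpa [Set.sUnion_image] using hf
  · rintro ⟨F, hF, hf⟩
    refine ⟨F.image branch, ?_, ?_⟩
    · rw [Finset.coe_image]
      exact Set.image_mono hF
    · simpa [Set.sUnion_image] using hf

/-- An infinite set that is almost contained in finitely many branches and is contained in a
branch `y` forces `y` to be among these. -/
lemma s19_mem_of_inf {C : Set (List Bool)} {y : ℕ → Bool} {F : Finset (ℕ → Bool)}
    (hC : C.Infinite) (hy : C ⊆ branch y) (hF : (C \ ⋃ x ∈ F, branch x).Finite) : y ∈ F := by
  by_contra hn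
  apply hC
  have h2 : (⋃ x ∈ F, branch x ∩ branch y).Finite := by
    apply Set.Finite.biUnion F.finite_toSet
    intro x hx
    apply s19_branch_ad
    rintro rfl
    exact hn hx
  apply (hF.union h2).subset
  intro s hs
  by_cases h : s ∈ ⋃ x ∈ F, branch x
  · right
    simp only [Set.mem_iUnion] at h ⊢
    obtain ⟨x, hx, hsx⟩ := h
    exact ⟨x, hx, hsx, hy hs⟩
  · exact Or.inl ⟨hs, h⟩

lemma s19_map_iff {g : List Bool → List Bool} {A B : Set (ℕ → Bool)}
    (h : mapFilter g (SFam (branch '' B)) = SFam (branch '' A)) (Y : Set (List Bool)) :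
    g ⁻¹' Y ∈ idealGen (branch '' B) ↔ Y ∈ idealGen (branch '' A) := by
  have := Set.ext_iff.1 h Yᶜ
  simpa [mapFilter, SFam] using this

/-! ### Recursion and cardinals -/

lemma s19_rec {J V : Type} [LinearOrder J] [WellFoundedLT J]
    (R : (j : J) → (∀ i, i < j → V) → V → Prop) (h : ∀ j p, ∃ v, R j p v) :
    ∃ f : J → V, ∀ j, R j (fun i _ => f i) (f j) := by
  choose c hc using h
  refine ⟨(wellFounded_lt (α := J)).fix (C := fun _ => V) c, fun j => ?_⟩
  conv => arg 3; rw [WellFounded.fix_eq]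
  exact hc _ _

lemma s19_finset_lt (D : Type) (h : Cardinal.mk D < Cardinal.continuum) :
    Cardinal.mk (Finset D) < Cardinal.continuum := by
  rcases finite_or_infinite D with hD | hD
  · exact (Cardinal.lt_aleph0_of_finite _).trans Cardinal.aleph0_lt_continuum
  · rwa [Cardinal.mk_finset_of_infinite]

lemma s19_mk_cantor : Cardinal.mk (ℕ → Bool) = Cardinal.continuum := by simp

lemma s19_mk_fun : Cardinal.mk (List Bool → List Bool) = Cardinal.continuum := by
  simp

lemma s19_diff_card {X D : Set (ℕ → Bool)} (hX : Cardinal.mk X = Cardinal.continuum)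
    (hD : Cardinal.mk D < Cardinal.continuum) :
    Cardinal.mk (X \ D : Set (ℕ → Bool)) = Cardinal.continuum := by
  apply le_antisymm
  · rw [← hX]; exact Cardinal.mk_le_mk_of_subset Set.diff_subset
  · by_contra hlt
    push Not at hlt
    have h1 : Cardinal.mk X ≤ Cardinal.mk (X \ D : Set (ℕ → Bool)) + Cardinal.mk D :=
      (Cardinal.mk_le_mk_of_subset (by intro x hx; by_cases h : x ∈ D <;> simp [hx, h])).trans
        (Cardinal.mk_union_le (X \ D) D)
    rw [hX] at h1
    exact absurd h1 (not_le.2 (Cardinal.add_lt_of_lt Cardinal.aleph0_le_continuum hlt hD))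

/-- The step of the recursion. -/
lemma s19_step (Q : (ℕ → Bool) → (ℕ → Bool) → Prop) (D : Set (ℕ → Bool))
    (hD : Cardinal.mk D < Cardinal.continuum) :
    ∃ p : (ℕ → Bool) × (ℕ → Bool), p.1 ∉ D ∧ p.2 ∉ D ∧
      ((∃ x ∉ D, ∃ y ∉ D, Q x y) → Q p.1 p.2) := by
  by_cases h : ∃ x ∉ D, ∃ y ∉ D, Q x y
  · obtain ⟨x, hx, y, hy, hQ⟩ := h
    exact ⟨(x, y), hx, hy, fun _ => hQ⟩
  · obtain ⟨x, hx⟩ : ∃ x, x ∉ D := by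
      by_contra hn
      push Not at hn
      rw [Set.eq_univ_of_forall hn, Cardinal.mk_univ, s19_mk_cantor] at hD
      exact lt_irrefl _ hD
    exact ⟨(x, x), hx, hx, fun hex => absurd hex h⟩

/-- The relation killing `g`. -/
def s19Q (g : List Bool → List Bool) (x y : ℕ → Bool) : Prop :=
  (branch y ∩ g ⁻¹' branch x).Infinite

/-- If no pair outside of a small set `D` is `g`-related then `g` is not a witness. -/
lemma s19_no_pair {g : List Bool → List Bool} {A B D : Set (ℕ → Bool)}
    (hA : Cardinal.mk A = Cardinal.continuum) (hD : Cardinal.mk D < Cardinal.continuum)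
    (hno : ¬ ∃ x ∉ D, ∃ y ∉ D, s19Q g x y)
    (h : mapFilter g (SFam (branch '' B)) = SFam (branch '' A)) : False := by
  classical
  have key : ∀ x : (A \ D : Set (ℕ → Bool)), ∃ F : Finset D,
      (∀ y ∈ F, (y : ℕ → Bool) ∈ B) ∧ (g ⁻¹' branch x.1 \ ⋃ y ∈ F, branch y.1).Finite := by
    rintro ⟨x, hxA, hxD⟩
    have h1 : branch x ∈ idealGen (branch '' A) :=
      (s19_mem_ideal _ _).2 ⟨{x}, by simpa using hxA, by simp⟩
    obtain ⟨F, hFB, hf⟩ := (s19_mem_ideal _ _).1 ((s19_map_iff h _).2 h1)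
    refine ⟨F.subtype (· ∈ D), ?_, ?_⟩
    · intro y hy
      exact hFB (by simpa using hy)
    · have h2 : (⋃ y ∈ (F : Set (ℕ → Bool)) \ D, branch y ∩ g ⁻¹' branch x).Finite := by
        apply Set.Finite.biUnion (F.finite_toSet.subset Set.diff_subset)
        intro y hy
        by_contra hinf
        exact hno ⟨x, hxD, y, hy.2, hinf⟩
      apply (hf.union h2).subset
      rintro s ⟨hs, hn⟩
      by_cases hsF : s ∈ ⋃ y ∈ F, branch y
      · right
        simp only [Set.mem_iUnion] at hsF ⊢
        obtain ⟨y, hyF, hsy⟩ := hsF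
        refine ⟨y, ⟨hyF, fun hyD => hn ?_⟩, hsy, hs⟩
        simp only [Set.mem_iUnion]
        exact ⟨⟨y, hyD⟩, by simpa using hyF, hsy⟩
      · exact Or.inl ⟨hs, hsF⟩
  choose φ hφB hφ using key
  have hc := s19_diff_card hA hD
  have : Infinite (A \ D : Set (ℕ → Bool)) := by
    rw [Cardinal.infinite_iff, hc]; exact Cardinal.aleph0_le_continuum
  obtain ⟨F, hFinf⟩ := Cardinal.exists_infinite_fiber φ (by rw [hc]; exact s19_finset_lt _ hD)
  set Z := φ ⁻¹' {F} with hZ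
  set Y : Set (List Bool) :=
    {s | (∃ x ∈ Z, s ∈ branch x.1) ∧ g ⁻¹' {s} ⊆ ⋃ y ∈ F, branch y.1} with hY
  have hYB : g ⁻¹' Y ∈ idealGen (branch '' B) := by
    rw [s19_mem_ideal]
    obtain ⟨x₀, hx₀⟩ := Set.infinite_coe_iff.1 hFinf |>.nonempty
    refine ⟨F.image Subtype.val, ?_, ?_⟩
    · intro y hy
      simp only [Finset.coe_image, Set.mem_image, Finset.mem_coe] at hy
      obtain ⟨y, hy, rfl⟩ := hy
      apply hφB x₀
      rw [show φ x₀ = F from hx₀]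
      exact hy
    · convert Set.finite_empty
      rw [Set.diff_eq_empty]
      intro s hs
      have := hs.2 (rfl : g s = g s)
      simpa using this
  obtain ⟨G, hGA, hG⟩ := (s19_mem_ideal _ _).1 ((s19_map_iff h _).1 hYB)
  apply Set.infinite_coe_iff.1 hFinf
  apply Set.Finite.of_finite_image (f := Subtype.val) _ Subtype.val_injective.injOn
  apply G.finite_toSet.subset
  rintro _ ⟨x, hx, rfl⟩
  have hxF : φ x = F := hx
  have hfin := hφ x
  rw [hxF] at hfin
  have hCinf : (branch x.1 \ g '' (g ⁻¹' branch x.1 \ ⋃ y ∈ F, branch y.1)).Infinite :=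
    (s19_branch_inf _).diff (hfin.image g)
  apply s19_mem_of_inf hCinf Set.diff_subset
  apply hG.subset
  apply Set.diff_subset_diff_left
  rintro s ⟨hs, hsn⟩
  refine ⟨⟨x, hx, hs⟩, ?_⟩
  rintro t (ht : g t = s)
  by_contra htn
  exact hsn ⟨t, ⟨by simpa [ht] using hs, htn⟩, ht⟩

/-- For every infinite cardinal `κ < 𝔠` there is a κ-indexed RK-antichain of filters
`S_{𝒜_{X_α}}` with each `|X_α| = 𝔠`. -/
theorem statement19 (κ : Cardinal) (hκ : Cardinal.aleph0 ≤ κ)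
    (hlt : κ < Cardinal.continuum) :
    ∃ (I : Type) (X : I → Set (ℕ → Bool)),
      Cardinal.mk I = κ ∧
      (∀ α : I, Cardinal.mk ↥(X α) = Cardinal.continuum) ∧
      ∀ α β : I, α ≠ β →
        ¬ ∃ g : List Bool → List Bool, Function.Surjective g ∧
            mapFilter g (SFam (branch '' X β)) = SFam (branch '' X α) := by
  induction κ using Cardinal.inductionOn with | _ I => ?_
  let T := (List Bool → List Bool) × I × I
  have hT : Cardinal.mk T = Cardinal.continuum := by
    have : Cardinal.mk T = Cardinal.continuum * (Cardinal.mk I * Cardinal.mk I) := by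
      rw [← s19_mk_fun]; simp [T]
    rw [this, Cardinal.mul_eq_self hκ]
    exact Cardinal.mul_eq_left Cardinal.aleph0_le_continuum hlt.le
      (ne_of_gt (Cardinal.aleph0_pos.trans_le hκ))
  let J := (Cardinal.continuum.{0}).ord.ToType
  obtain ⟨e⟩ : Nonempty (J ≃ T) := Cardinal.eq.1 (by rw [hT]; exact Cardinal.mk_ord_toType _)
  let P : (j : J) → (∀ i, i < j → (ℕ → Bool) × (ℕ → Bool)) → Set (ℕ → Bool) := fun j p =>
    Set.range (fun i : Set.Iio j => (p i.1 i.2).1) ∪ Set.range (fun i : Set.Iio j => (p i.1 i.2).2)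
  have hP : ∀ j p, Cardinal.mk (P j p) < Cardinal.continuum := by
    intro j p
    have hj : Cardinal.mk (Set.Iio j) < Cardinal.continuum := Cardinal.mk_Iio_toType_ord_lt j
    exact (Cardinal.mk_union_le _ _).trans_lt
      (Cardinal.add_lt_of_lt Cardinal.aleph0_le_continuum
        (Cardinal.mk_range_le.trans_lt hj) (Cardinal.mk_range_le.trans_lt hj))
  obtain ⟨f, hf⟩ := s19_rec (J := J)
    (fun j p v => v.1 ∉ P j p ∧ v.2 ∉ P j p ∧
      ((∃ x ∉ P j p, ∃ y ∉ P j p, s19Q (e j).1 x y) → s19Q (e j).1 v.1 v.2))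
    (fun j p => s19_step _ _ (hP j p))
  have hxx : ∀ i j, i < j → (f j).1 ≠ (f i).1 := fun i j hij h =>
    (hf j).1 (Or.inl ⟨⟨i, hij⟩, h.symm⟩)
  have hxy : ∀ i j, i < j → (f j).1 ≠ (f i).2 := fun i j hij h =>
    (hf j).1 (Or.inr ⟨⟨i, hij⟩, h.symm⟩)
  have hyx : ∀ i j, i < j → (f j).2 ≠ (f i).1 := fun i j hij h =>
    (hf j).2.1 (Or.inl ⟨⟨i, hij⟩, h.symm⟩)
  have hinj : Function.Injective (fun j => (f j).1) := by
    intro i j h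
    rcases lt_trichotomy i j with hij | hij | hij
    · exact absurd h.symm (hxx _ _ hij)
    · exact hij
    · exact absurd h (hxx _ _ hij)
  let X : I → Set (ℕ → Bool) := fun α => {x | ∃ j, (e j).2.1 = α ∧ (f j).1 = x}
  have hX : ∀ α, Cardinal.mk (X α) = Cardinal.continuum := by
    intro α
    apply le_antisymm
    · exact (Cardinal.mk_set_le _).trans s19_mk_cantor.le
    · rw [← s19_mk_fun]
      refine Cardinal.mk_le_of_injective
        (f := fun g => (⟨(f (e.symm (g, α, α))).1, e.symm (g, α, α), by simp, rfl⟩ : X α)) ?_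
      intro g k h
      have h1 := e.symm.injective (hinj (congrArg Subtype.val h))
      exact congrArg Prod.fst h1
  refine ⟨I, X, rfl, hX, ?_⟩
  rintro α β hαβ ⟨g, -, hg⟩
  set t : J := e.symm (g, α, β) with ht
  have het : e t = (g, α, β) := by simp [ht]
  by_cases hno : ∃ x ∉ P t (fun i _ => f i), ∃ y ∉ P t (fun i _ => f i), s19Q (e t).1 x y
  · have hQ := (hf t).2.2 hno
    rw [het] at hQ
    have hxA : (f t).1 ∈ X α := ⟨t, by rw [het], rfl⟩
    have h1 : branch (f t).1 ∈ idealGen (branch '' X α) :=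
      (s19_mem_ideal _ _).2 ⟨{(f t).1}, by simpa using hxA, by simp⟩
    obtain ⟨F, hFB, hF⟩ := (s19_mem_ideal _ _).1 ((s19_map_iff hg _).2 h1)
    have hy : (f t).2 ∈ F := s19_mem_of_inf hQ Set.inter_subset_left
      (hF.subset (Set.diff_subset_diff_left Set.inter_subset_right))
    obtain ⟨s, hs, hsy⟩ := hFB hy
    rcases lt_trichotomy s t with hst | hst | hst
    · exact hyx _ _ hst hsy.symm
    · rw [hst, het] at hs
      exact hαβ hs
    · exact hxy _ _ hst hsy
  · rw [het] at hno
    exact s19_no_pair (hX α) (hP t (fun i _ => f i)) hno hg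
end
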